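/- arXiv:1210.4586 — 3 statements merged into one kernel-verified Lean document; each statement's English description precedes it below -/
import Mathlib

section
/- Let n ≥ 1, c_u ∈ (0,1), C_u ∈ (1,∞), and let U ⊊ ℝⁿ be an unbounded (c_u,C_u)-uniform domain with nonempty boundary. Let h : closure(U) → ℝ be continuous, positive and harmonic on U, and identically 0 on ∂U. Then there exists a constant P ∈ (0,∞), depending only on n, c_u and C_u, such that for every x ∈ U, every r > 0, and every continuously differentiable function f : U → ℝ with ∫_{B_U(x,r)} |∇f|² h² dλ < ∞, one has ∫_{B_U(x,r)} |f − f_B|² h² dλ ≤ P · r² · ∫_{B_U(x,r)} |∇f|² h² dλ, where B_U(x,r) = {y ∈ U : d_U(x,y) < r}, λ is Lebesgue measure, and f_B = (∫_{B_U(x,r)} f h² dλ)/(∫_{B_U(x,r)} h² dλ) is the h²λ-weighted mean of f over B_U(x,r). -/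
open Set Metric MeasureTheory ENNReal

noncomputable section

abbrev En (n : ℕ) := EuclideanSpace ℝ (Fin n)

/-- The length of the curve `γ : [0,1] → X`, defined as the supremum of sums
`∑ d(γ(t_i), γ(t_{i-1}))` over partitions `0 ≤ t₀ < … < t_k ≤ 1`. -/
def curveLength {X : Type*} [PseudoEMetricSpace X] (γ : ℝ → X) : ℝ≥0∞ :=
  eVariationOn γ (Set.Icc 0 1)

/-- `γ` is a continuous curve in `Ω` from `x` to `y`. -/
def IsCurveIn {X : Type*} [PseudoEMetricSpace X] (Ω : Set X) (x y : X) (γ : ℝ → X) : Prop :=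
  ContinuousOn γ (Set.Icc 0 1) ∧ Set.MapsTo γ (Set.Icc 0 1) Ω ∧ γ 0 = x ∧ γ 1 = y

/-- The inner (pseudo)metric of `Ω`: the infimum of lengths of continuous curves
joining `x` to `y` inside `Ω`. -/
def innerDist {X : Type*} [PseudoEMetricSpace X] (Ω : Set X) (x y : X) : ℝ≥0∞ :=
  ⨅ (γ : ℝ → X) (_ : IsCurveIn Ω x y γ), curveLength γ

/-- `U` is a `(c,C)`-uniform domain in `ℝⁿ`. -/
def IsUniformDomain {n : ℕ} (c C : ℝ) (U : Set (En n)) : Prop :=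
  IsOpen U ∧ IsConnected U ∧
    ∀ x ∈ U, ∀ y ∈ U, ∃ γ : ℝ → En n, IsCurveIn U x y γ ∧
      curveLength γ ≤ ENNReal.ofReal (C * dist x y) ∧
      ∀ t ∈ Set.Icc (0:ℝ) 1,
        c * min (dist x (γ t)) (dist (γ t) y) ≤ Metric.infDist (γ t) (frontier U)

/-- The Laplacian `∑ ∂²f/∂xᵢ²` of `f : ℝⁿ → ℝ`. -/
def lap {n : ℕ} (f : En n → ℝ) (x : En n) : ℝ :=
  ∑ i : Fin n,
    fderiv ℝ (fun y => fderiv ℝ f y (EuclideanSpace.single i 1)) x (EuclideanSpace.single i 1)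

/-- `f` is harmonic on the open set `V`: twice continuously differentiable with
vanishing Laplacian. -/
def IsHarmonicOn {n : ℕ} (f : En n → ℝ) (V : Set (En n)) : Prop :=
  ContDiffOn ℝ 2 f V ∧ ∀ x ∈ V, lap f x = 0

lemma var_split {X : Type*} [PseudoEMetricSpace X] {γ : ℝ → X} {u v : ℝ} (huv : u ≤ v)
    (hc : ContinuousOn γ (Icc u v)) {a b : ℝ≥0∞} (ha : 0 < a) (hb : 0 < b)
    (hV : eVariationOn γ (Icc u v) < a + b) :
    ∃ t ∈ Icc u v, eVariationOn γ (Icc u t) < a ∧ eVariationOn γ (Icc t v) < b := by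
  have hbv : BoundedVariationOn γ (Icc u v) := ne_top_of_lt hV
  have : PreconnectedSpace (Icc u v) := Subtype.preconnectedSpace isPreconnected_Icc
  have hadd : ∀ p q w : ℝ, p ≤ q → q ≤ w →
      eVariationOn γ (Icc p q) + eVariationOn γ (Icc q w) = eVariationOn γ (Icc p w) := by
    intro p q w h1 h2
    have := eVariationOn.Icc_add_Icc γ (s := univ) h1 h2 (mem_univ q)
    simpa using this
  let A : Set (Icc u v) := {t | eVariationOn γ (Icc u t) < a}
  let B : Set (Icc u v) := {t | eVariationOn γ (Icc (t : ℝ) v) < b}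
  have hA : IsOpen A := by
    rw [isOpen_iff_mem_nhds]
    intro t ht
    have h1 := hbv.tendsto_eVariationOn_Icc_zero_right (t : ℝ)
      ((hc t t.2).mono inter_subset_left)
    have h2 : ∀ᶠ y in nhdsWithin (t : ℝ) (Icc u v),
        eVariationOn γ (Icc u v ∩ Icc (t : ℝ) y) < a - eVariationOn γ (Icc u t) := by
      refine h1.eventually_lt_const ?_
      exact tsub_pos_of_lt ht
    rw [mem_nhds_subtype_iff_nhdsWithin]
    filter_upwards [h2, self_mem_nhdsWithin] with y hy hyI
    refine ⟨⟨y, hyI⟩, ?_, rfl⟩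
    change eVariationOn γ (Icc u y) < a
    rcases le_total y t with h | h
    · exact (eVariationOn.mono _ (Icc_subset_Icc_right h)).trans_lt ht
    · rw [← hadd u t y t.2.1 h]
      have h3 : Icc u v ∩ Icc (t : ℝ) y = Icc (t : ℝ) y := by
        apply inter_eq_right.2
        exact Icc_subset_Icc t.2.1 hyI.2
      rw [h3] at hy
      rw [add_comm]
      exact lt_tsub_iff_right.1 hy
  have hB : IsOpen B := by
    rw [isOpen_iff_mem_nhds]
    intro t ht
    have h1 := hbv.tendsto_eVariationOn_Icc_zero_left (x := (t : ℝ))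
      ((hc t t.2).mono inter_subset_left)
    have h2 : ∀ᶠ y in nhdsWithin (t : ℝ) (Icc u v),
        eVariationOn γ (Icc u v ∩ Icc y (t : ℝ)) < b - eVariationOn γ (Icc (t : ℝ) v) := by
      refine h1.eventually_lt_const ?_
      exact tsub_pos_of_lt ht
    rw [mem_nhds_subtype_iff_nhdsWithin]
    filter_upwards [h2, self_mem_nhdsWithin] with y hy hyI
    refine ⟨⟨y, hyI⟩, ?_, rfl⟩
    change eVariationOn γ (Icc y v) < b
    rcases le_total (t : ℝ) y with h | h
    · exact (eVariationOn.mono _ (Icc_subset_Icc_left h)).trans_lt ht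
    · rw [← hadd y t v h t.2.2]
      have h3 : Icc u v ∩ Icc y (t : ℝ) = Icc y (t : ℝ) := by
        apply inter_eq_right.2
        exact Icc_subset_Icc hyI.1 t.2.2
      rw [h3] at hy
      exact lt_tsub_iff_right.1 hy
  have hcov : A ∪ B = univ := by
    rw [eq_univ_iff_forall]
    intro t
    by_contra hcon
    simp only [A, B, mem_union, mem_ofPred_eq, not_or, not_lt] at hcon
    have := add_le_add hcon.1 hcon.2
    rw [hadd u t v t.2.1 t.2.2] at this
    exact absurd hV (not_lt.2 this)
  obtain ⟨t, ht1, ht2⟩ := nonempty_inter hA hB hcov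
    ⟨⟨u, left_mem_Icc.2 huv⟩, by simpa [A] using ha⟩
    ⟨⟨v, right_mem_Icc.2 huv⟩, by simpa [B] using hb⟩
  exact ⟨t, t.2, ht1, ht2⟩

lemma innerDist_le {X : Type*} [PseudoEMetricSpace X] {U : Set X} {x y : X} {γ : ℝ → X}
    (hγ : IsCurveIn U x y γ) : innerDist U x y ≤ curveLength γ := iInf₂_le γ hγ

lemma innerDist_sub {X : Type*} [PseudoEMetricSpace X] {U : Set X} {x y : X} {γ : ℝ → X}
    (hγ : IsCurveIn U x y γ) {u v : ℝ} (hu : 0 ≤ u) (huv : u ≤ v) (hv : v ≤ 1) :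
    innerDist U (γ u) (γ v) ≤ eVariationOn γ (Icc u v) := by
  have hm : Monotone (fun s : ℝ => u + s * (v - u)) := by
    intro a b hab
    have : 0 ≤ v - u := by linarith
    have := mul_le_mul_of_nonneg_right hab this
    simp only; linarith
  have hmaps : MapsTo (fun s : ℝ => u + s * (v - u)) (Icc 0 1) (Icc u v) := by
    intro s hs
    have : 0 ≤ v - u := by linarith
    constructor <;> nlinarith [hs.1, hs.2]
  have hsub : Icc u v ⊆ Icc 0 1 := Icc_subset_Icc hu hv
  have hcur : IsCurveIn U (γ u) (γ v) (γ ∘ fun s : ℝ => u + s * (v - u)) := by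
    refine ⟨?_, ?_, by simp, by simp⟩
    · exact (hγ.1.mono hsub).comp (by fun_prop) hmaps
    · exact fun s hs => hγ.2.1 (hsub (hmaps hs))
  refine (innerDist_le hcur).trans ?_
  exact eVariationOn.comp_le_of_monotoneOn _ _ (hm.monotoneOn _) hmaps

lemma innerDist_split {X : Type*} [PseudoEMetricSpace X] {U : Set X} {x y : X} {a b : ℝ≥0∞}
    (ha : 0 < a) (hb : 0 < b) (h : innerDist U x y < a + b) :
    ∃ m ∈ U, innerDist U x m < a ∧ innerDist U m y < b := by
  simp only [innerDist, iInf_lt_iff] at h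
  obtain ⟨γ, hγ, hl⟩ := h
  obtain ⟨t, ht, h1, h2⟩ := var_split zero_le_one hγ.1 ha hb hl
  refine ⟨γ t, hγ.2.1 ht, ?_, ?_⟩
  · have := innerDist_sub hγ le_rfl ht.1 ht.2
    rw [hγ.2.2.1] at this
    exact this.trans_lt h1
  · have := innerDist_sub hγ ht.1 ht.2 le_rfl
    rw [hγ.2.2.2] at this
    exact this.trans_lt h2

lemma edist_le_innerDist {X : Type*} [PseudoEMetricSpace X] {U : Set X} {x y : X} :
    edist x y ≤ innerDist U x y := by
  refine le_iInf₂ fun γ hγ => ?_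
  have := eVariationOn.edist_le γ (s := Icc 0 1) (x := 0) (y := 1) (by simp) (by simp)
  rwa [hγ.2.2.1, hγ.2.2.2] at this

lemma innerDist_segment {n : ℕ} {U : Set (En n)} {x y : En n} (h : segment ℝ x y ⊆ U) :
    innerDist U x y ≤ edist x y := by
  have hcur : IsCurveIn U x y (AffineMap.lineMap x y : ℝ → En n) := by
    refine ⟨AffineMap.lineMap_continuous.continuousOn, ?_, by simp, by simp⟩
    intro t ht
    apply h
    rw [segment_eq_image_lineMap]
    exact ⟨t, ht, rfl⟩
  refine (innerDist_le hcur).trans ?_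
  · have hl : LipschitzWith (nndist x y) (AffineMap.lineMap x y : ℝ → En n) := lipschitzWith_lineMap x y
    have := (hl.lipschitzOnWith (s := univ)).comp_eVariationOn_le (f := (AffineMap.lineMap x y : ℝ → En n))
      (g := id) (s := Icc (0:ℝ) 1) (mapsTo_univ _ _)
    simp only [Function.comp_id, eVariationOn_id_Icc, sub_zero, ENNReal.ofReal_one, mul_one] at this
    rw [edist_nndist]
    exact this

lemma innerDist_self {n : ℕ} {U : Set (En n)} {x : En n} (h : x ∈ U) : innerDist U x x = 0 := by
  have : innerDist U x x ≤ edist x x := innerDist_segment (by simpa using h)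
  simpa using this

lemma innerDist_triangle {X : Type*} [PseudoEMetricSpace X] {U : Set X} (x y z : X) :
    innerDist U x z ≤ innerDist U x y + innerDist U y z := by
  conv_rhs => unfold innerDist
  simp only [ENNReal.iInf_add, ENNReal.add_iInf]
  refine le_iInf₂ fun γ₂ h₂ => le_iInf₂ fun γ₁ h₁ => ?_
  let γ : ℝ → X := fun t => if t ≤ 1/2 then γ₁ (2 * t) else γ₂ (2 * t - 1)
  have e1 : EqOn γ (γ₁ ∘ fun t => 2 * t) (Icc 0 (1/2)) := by
    intro t ht
    simp only [γ, if_pos ht.2, Function.comp]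
  have e2 : EqOn γ (γ₂ ∘ fun t => 2 * t - 1) (Icc (1/2) 1) := by
    intro t ht
    rcases eq_or_lt_of_le ht.1 with h | h
    · subst h
      simp [γ, h₁.2.2.2, h₂.2.2.1]
    · simp only [γ, if_neg (not_le.2 h), Function.comp]
  have m1 : MapsTo (fun t : ℝ => 2 * t) (Icc 0 (1/2)) (Icc 0 1) := by
    intro t ht; constructor <;> simp only <;> linarith [ht.1, ht.2]
  have m2 : MapsTo (fun t : ℝ => 2 * t - 1) (Icc (1/2) 1) (Icc 0 1) := by
    intro t ht; constructor <;> simp only <;> linarith [ht.1, ht.2]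
  have hI : (Icc (0:ℝ) 1) = Icc 0 (1/2) ∪ Icc (1/2) 1 := by
    rw [Icc_union_Icc_eq_Icc] <;> norm_num
  have c1 : ContinuousOn γ (Icc 0 (1/2)) := ContinuousOn.congr (h₁.1.comp (by fun_prop) m1) e1
  have c2 : ContinuousOn γ (Icc (1/2) 1) := ContinuousOn.congr (h₂.1.comp (by fun_prop) m2) e2
  have hcur : IsCurveIn U x z γ := by
    refine ⟨?_, ?_, ?_, ?_⟩
    · rw [hI]
      exact c1.union_of_isClosed c2 isClosed_Icc isClosed_Icc
    · intro t ht
      rw [hI] at ht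
      rcases ht with ht | ht
      · rw [e1 ht]; exact h₁.2.1 (m1 ht)
      · rw [e2 ht]; exact h₂.2.1 (m2 ht)
    · rw [e1 (by norm_num)]; simpa using h₁.2.2.1
    · rw [e2 (by norm_num)]; norm_num; exact h₂.2.2.2
  refine (innerDist_le hcur).trans ?_
  have := eVariationOn.Icc_add_Icc γ (s := univ) (a := 0) (b := 1/2) (c := 1)
      (by norm_num) (by norm_num) (mem_univ _)
  simp only [univ_inter] at this
  unfold curveLength
  rw [← this, eVariationOn.congr e1, eVariationOn.congr e2]
  refine add_le_add ?_ ?_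
  · exact eVariationOn.comp_le_of_monotoneOn _ _ (fun a _ b _ h => by linarith) m1
  · exact eVariationOn.comp_le_of_monotoneOn _ _ (fun a _ b _ h => by linarith) m2

lemma chain_aux {X : Type*} [PseudoMetricSpace X] {γ : ℝ → X} {v : ℝ} {σ : ℝ} (hσ : 0 < σ) (N : ℕ) :
    ∀ u : ℝ, u ≤ v → ContinuousOn γ (Icc u v) →
    eVariationOn γ (Icc u v) < ENNReal.ofReal ((N + 1 : ℕ) * σ) →
    ∃ q : ℕ → ℝ, q 0 = u ∧ q (N + 1) = v ∧ (∀ i, q i ∈ Icc u v) ∧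
      ∀ i, dist (γ (q i)) (γ (q (i + 1))) ≤ σ := by
  induction N with
  | zero =>
    intro u huv hc hV
    refine ⟨fun i => if i = 0 then u else v, by simp, by simp, ?_, ?_⟩
    · intro i; dsimp only; split_ifs <;> simp [huv]
    · intro i
      by_cases hi : i = 0
      · subst hi
        have := (eVariationOn.edist_le γ (s := Icc u v) (x := u) (y := v) (by simp [huv]) (by simp [huv])).trans hV.le
        simp only [zero_add, Nat.cast_one, one_mul] at this
        simp
        rw [edist_dist, ENNReal.ofReal_le_ofReal_iff hσ.le] at this
        exact this
      · simp [hi, hσ.le]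
  | succ N ih =>
    intro u huv hc hV
    have e : ENNReal.ofReal ((N + 1 + 1 : ℕ) * σ) = ENNReal.ofReal σ + ENNReal.ofReal ((N + 1 : ℕ) * σ) := by
      rw [← ENNReal.ofReal_add hσ.le (by positivity)]
      congr 1; push_cast; ring
    rw [e] at hV
    obtain ⟨t, ht, h1, h2⟩ := var_split huv hc (ENNReal.ofReal_pos.2 hσ)
      (ENNReal.ofReal_pos.2 (by positivity)) hV
    obtain ⟨q, q0, q1, q2, q3⟩ := ih t ht.2 (hc.mono (Icc_subset_Icc_left ht.1)) h2
    refine ⟨fun i => Nat.casesOn i u q, rfl, q1, ?_, ?_⟩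
    · intro i
      cases i with
      | zero => simp [huv]
      | succ i => exact ⟨ht.1.trans (q2 i).1, (q2 i).2⟩
    · intro i
      cases i with
      | zero =>
        simp only [q0]
        have := (eVariationOn.edist_le γ (s := Icc u t) (x := u) (y := t) (by simp [ht.1]) (by simp [ht.1])).trans h1.le
        rw [edist_dist, ENNReal.ofReal_le_ofReal_iff hσ.le] at this
        exact this
      | succ i => exact q3 i


lemma ball_infDist_subset {n : ℕ} {U : Set (En n)} (hU : IsOpen U) {x : En n} (hx : x ∈ U) :
    ball x (infDist x (frontier U)) ⊆ U := by
  rcases le_or_gt (infDist x (frontier U)) 0 with h0 | h0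
  · rw [ball_eq_empty.2 h0]; exact empty_subset _
  refine (convex_ball x _).isPreconnected.subset_of_closure_inter_subset hU
    ⟨x, mem_ball_self h0, hx⟩ ?_
  rintro z ⟨hz1, hz2⟩
  by_contra hz
  have : z ∈ frontier U := by
    rw [hU.frontier_eq]; exact ⟨hz1, hz⟩
  have := infDist_le_dist_of_mem (x := x) this
  rw [mem_ball, dist_comm] at hz2
  linarith

lemma corkscrew {n : ℕ} {cu Cu : ℝ} (hcu : 0 < cu) {U : Set (En n)}
    (hU : IsUniformDomain cu Cu U) (hnb : ¬ Bornology.IsBounded U) {w : En n} (hw : w ∈ U)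
    {R : ℝ} (hR : 0 < R) :
    ∃ z ∈ U, dist w z ≤ R / 2 ∧ cu * R / 2 ≤ infDist z (frontier U) ∧
      innerDist U w z ≤ ENNReal.ofReal (Cu * R) := by
  obtain ⟨ho, hconn, hunif⟩ := hU
  have hfar : ∃ p ∈ U, R < dist w p := by
    by_contra hcon
    push Not at hcon
    apply hnb
    exact (isBounded_closedBall (x := w) (r := R)).subset
      (fun p hp => by rw [mem_closedBall, dist_comm]; exact hcon p hp)
  obtain ⟨p, hp, hpR⟩ := hfar
  have hpre : IsPreconnected ((fun y => dist w y) '' U) :=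
    hconn.isPreconnected.image _ (by fun_prop)
  have hmem : R ∈ (fun y => dist w y) '' U := by
    refine hpre.ordConnected.out ⟨w, hw, rfl⟩ ⟨p, hp, rfl⟩ ⟨?_, hpR.le⟩
    simpa using hR.le
  obtain ⟨w', hw', hdw⟩ := hmem
  simp only at hdw
  obtain ⟨γ, hγ, hlen, hδ⟩ := hunif w hw w' hw'
  have hcont : ContinuousOn (fun t => dist w (γ t)) (Icc 0 1) := by
    exact (continuous_const.dist continuous_id).comp_continuousOn hγ.1
  have hivt := intermediate_value_Icc (zero_le_one (α := ℝ)) hcont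
  have : R / 2 ∈ Icc (dist w (γ 0)) (dist w (γ 1)) := by
    rw [hγ.2.2.1, hγ.2.2.2, hdw]; simp; constructor <;> linarith
  obtain ⟨t, ht, hdt⟩ := hivt this
  simp only at hdt
  refine ⟨γ t, hγ.2.1 ht, hdt.le, ?_, ?_⟩
  · have h1 := hδ t ht
    have h2 : R / 2 ≤ dist (γ t) w' := by
      have := dist_triangle w (γ t) w'
      linarith
    have h3 : R / 2 ≤ min (dist w (γ t)) (dist (γ t) w') := le_min hdt.ge h2
    have := mul_le_mul_of_nonneg_left h3 hcu.le
    linarith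
  · have h1 := innerDist_sub hγ le_rfl ht.1 ht.2
    rw [hγ.2.2.1] at h1
    refine h1.trans ((eVariationOn.mono _ (Icc_subset_Icc_right ht.2)).trans (hlen.trans ?_))
    rw [hdw]

lemma connect {n : ℕ} {cu Cu : ℝ} (hcu : 0 < cu) (hcu1 : cu < 1) (hCu : 1 < Cu)
    {K e : ℝ} (hK : 0 < K) (he : 0 < e) :
    ∃ N : ℕ, ∀ U : Set (En n), IsUniformDomain cu Cu U → ∀ a ∈ U, ∀ b ∈ U, ∀ s : ℝ, 0 < s →
      s ≤ infDist a (frontier U) → s ≤ infDist b (frontier U) → dist a b ≤ K * s →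
      ∃ q : ℕ → En n, q 0 = a ∧ q N = b ∧ (∀ i, dist (q i) (q (i + 1)) ≤ e * s) ∧
        ∀ i, q i ∈ U ∧ cu * s / 2 ≤ infDist (q i) (frontier U) ∧
          innerDist U a (q i) ≤ ENNReal.ofReal (Cu * (K * s)) := by
  obtain ⟨N, hN⟩ := exists_nat_gt (Cu * K / e)
  refine ⟨N + 1, fun U hU a ha b hb s hs hsa hsb hab => ?_⟩
  obtain ⟨γ, hγ, hlen, hδ⟩ := hU.2.2 a ha b hb
  have hlen' : curveLength γ ≤ ENNReal.ofReal (Cu * (K * s)) := by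
    refine hlen.trans (ENNReal.ofReal_le_ofReal ?_)
    exact mul_le_mul_of_nonneg_left hab (by linarith)
  have hlt : eVariationOn γ (Icc 0 1) < ENNReal.ofReal ((N + 1 : ℕ) * (e * s)) := by
    refine hlen'.trans_lt ((ENNReal.ofReal_lt_ofReal_iff (by positivity)).2 ?_)
    rw [div_lt_iff₀ he] at hN
    push_cast
    nlinarith [mul_pos he hs]
  obtain ⟨q, q0, q1, q2, q3⟩ := chain_aux (mul_pos he hs) N 0 zero_le_one hγ.1 hlt
  refine ⟨fun i => γ (q i), by simp [q0, hγ.2.2.1], by simp [q1, hγ.2.2.2], q3, fun i => ⟨hγ.2.1 (q2 i), ?_, ?_⟩⟩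
  · have h1 := hδ _ (q2 i)
    have h2 := infDist_le_infDist_add_dist (s := frontier U) (x := a) (y := γ (q i))
    have h3 := infDist_le_infDist_add_dist (s := frontier U) (x := b) (y := γ (q i))
    rw [dist_comm] at h3
    rcases le_total (dist a (γ (q i))) (dist (γ (q i)) b) with h | h
    · rw [min_eq_left h] at h1
      by_cases h4 : s / 2 ≤ dist a (γ (q i))
      · nlinarith
      · nlinarith
    · rw [min_eq_right h] at h1
      by_cases h4 : s / 2 ≤ dist (γ (q i)) b
      · nlinarith
      · nlinarith
  · have h1 := innerDist_sub hγ le_rfl (q2 i).1 (q2 i).2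
    rw [hγ.2.2.1] at h1
    exact h1.trans ((eVariationOn.mono _ (Icc_subset_Icc_right (q2 i).2)).trans hlen')

lemma john_seq {n : ℕ} {U : Set (En n)} {x : En n} (hx : x ∈ U) {r θ : ℝ} (hr : 0 < r)
    (hθ : 0 < θ) (hθ1 : θ < 1) (J : ℕ) :
    ∀ y ∈ U, (innerDist U x y < ENNReal.ofReal (r - r * θ ^ J) ∨ (J = 0 ∧ y = x)) →
    ∃ Y : ℕ → En n, Y 0 = x ∧ (∀ j, J ≤ j → Y j = y) ∧
      (∀ j, Y j ∈ U ∧ innerDist U x (Y j) ≤ ENNReal.ofReal (r - r * θ ^ j) ∧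
        dist (Y j) (Y (j + 1)) ≤ (1 - θ) * (r * θ ^ j)) ∧
      ∀ j, j ≤ J → dist (Y j) y ≤ r * θ ^ j - r * θ ^ J := by
  induction J with
  | zero =>
    intro y hy hcase
    have hyx : y = x := by
      rcases hcase with h | h
      · simp at h
      · exact h.2
    subst hyx
    refine ⟨fun _ => y, rfl, fun _ _ => rfl, fun j => ⟨hy, by simp [innerDist_self hy], ?_⟩, ?_⟩
    · simp only [dist_self]
      have : 0 < θ ^ j := by positivity
      have : 0 < 1 - θ := by linarith
      positivity
    · intro j hj
      have : j = 0 := by omega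
      subst this; simp
  | succ J ih =>
    intro y hy hcase
    have hlt : innerDist U x y < ENNReal.ofReal (r - r * θ ^ (J + 1)) := by
      rcases hcase with h | h
      · exact h
      · exact absurd h.1 (by omega)
    have hJ : 0 < θ ^ J := by positivity
    have hJ1 : θ ^ J ≤ 1 := pow_le_one₀ hθ.le hθ1.le
    have hstep : 0 < (1 - θ) * (r * θ ^ J) := by
      have : 0 < 1 - θ := by linarith
      positivity
    obtain ⟨m, hm, hm1, hm2⟩ : ∃ m ∈ U, (innerDist U x m < ENNReal.ofReal (r - r * θ ^ J) ∨ (J = 0 ∧ m = x)) ∧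
        innerDist U m y < ENNReal.ofReal ((1 - θ) * (r * θ ^ J)) := by
      rcases Nat.eq_zero_or_pos J with h0 | h0
      · subst h0
        refine ⟨x, hx, Or.inr ⟨rfl, rfl⟩, ?_⟩
        convert hlt using 2; simp; ring
      · have hJ2 : θ ^ J < 1 := pow_lt_one₀ hθ.le hθ1 (by omega)
        have : 0 < r - r * θ ^ J := by nlinarith
        obtain ⟨m, hm, h1, h2⟩ := innerDist_split (U := U) (x := x) (y := y)
          (ENNReal.ofReal_pos.2 this) (ENNReal.ofReal_pos.2 hstep) (by
            rw [← ENNReal.ofReal_add this.le hstep.le]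
            convert hlt using 2; ring)
        exact ⟨m, hm, Or.inl h1, h2⟩
    have hmy : dist m y ≤ (1 - θ) * (r * θ ^ J) := by
      have := (edist_le_innerDist (U := U) (x := m) (y := y)).trans hm2.le
      rwa [edist_dist, ENNReal.ofReal_le_ofReal_iff hstep.le] at this
    obtain ⟨Y, Y0, Y1, Y2, Y3⟩ := ih m hm hm1
    refine ⟨fun j => if j ≤ J then Y j else y, by simp [Y0], ?_, ?_, ?_⟩
    · intro j hj
      simp [show ¬ j ≤ J by omega]
    · intro j
      dsimp only
      have hstepj : 0 ≤ (1 - θ) * (r * θ ^ j) := by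
        have : 0 < θ ^ j := by positivity
        have : 0 < 1 - θ := by linarith
        positivity
      by_cases hj : j ≤ J
      · rw [if_pos hj]
        refine ⟨(Y2 j).1, (Y2 j).2.1, ?_⟩
        by_cases hj' : j + 1 ≤ J
        · rw [if_pos hj']; exact (Y2 j).2.2
        · rw [if_neg hj']
          have : j = J := by omega
          subst this
          rw [Y1 j le_rfl]; exact hmy
      · rw [if_neg hj, if_neg (show ¬ j + 1 ≤ J by omega)]
        refine ⟨hy, hlt.le.trans (ENNReal.ofReal_le_ofReal ?_), by simpa using hstepj⟩
        have : θ ^ j ≤ θ ^ (J + 1) := pow_le_pow_of_le_one hθ.le hθ1.le (by omega)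
        nlinarith
    · intro j hj
      dsimp only
      by_cases hj' : j ≤ J
      · rw [if_pos hj']
        have h1 := Y3 j hj'
        have h2 := dist_triangle (Y j) m y
        have : θ ^ (J + 1) = θ ^ J * θ := pow_succ _ _
        rw [this]
        linarith
      · rw [if_neg hj']
        have : j = J + 1 := by omega
        subst this; simp


lemma hasDerivAt_pospow (k : ℕ) (hk : 1 ≤ k) (t : ℝ) :
    HasDerivAt (fun t : ℝ => (max t 0) ^ (k + 1)) ((k + 1 : ℕ) * (max t 0) ^ k) t := by
  rcases lt_trichotomy t 0 with h | h | h
  · rw [max_eq_right h.le, zero_pow (by omega), mul_zero]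
    refine (hasDerivAt_const t (0:ℝ)).congr_of_eventuallyEq ?_
    filter_upwards [Iio_mem_nhds h] with s hs
    rw [max_eq_right (le_of_lt hs), zero_pow (by omega)]
  · subst h
    rw [max_self, zero_pow (by omega), mul_zero, ← hasDerivWithinAt_univ, ← Iic_union_Ici (a := (0:ℝ))]
    refine HasDerivWithinAt.union ?_ ?_
    · refine (hasDerivWithinAt_const (0:ℝ) (Iic 0) (0:ℝ)).congr ?_ (by simp)
      intro s hs
      rw [max_eq_right hs, zero_pow (by omega)]
    · have := (hasDerivAt_pow (k + 1) (0:ℝ)).hasDerivWithinAt (s := Ici 0)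
      simp only [Nat.add_sub_cancel, zero_pow (show k ≠ 0 by omega), mul_zero] at this
      refine this.congr ?_ (by simp)
      intro s hs
      rw [max_eq_left hs]
  · rw [max_eq_left h.le]
    have := hasDerivAt_pow (k + 1) t
    refine this.congr_of_eventuallyEq ?_
    filter_upwards [Ioi_mem_nhds h] with s hs
    rw [max_eq_left (le_of_lt hs)]

lemma contDiff_pospow : ContDiff ℝ 2 (fun t : ℝ => (max t 0) ^ 3) := by
  have d1 : deriv (fun t : ℝ => (max t 0) ^ 3) = fun t => 3 * (max t 0) ^ 2 := by
    ext t; have := (hasDerivAt_pospow 2 (by norm_num) t).deriv; simpa using this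
  have d2 : deriv (fun t : ℝ => (max t 0) ^ 2) = fun t => 2 * (max t 0) := by
    ext t; have := (hasDerivAt_pospow 1 (by norm_num) t).deriv; simpa using this
  rw [show (2 : WithTop ℕ∞) = 1 + 1 by norm_num, contDiff_succ_iff_deriv]
  refine ⟨fun t => (hasDerivAt_pospow 2 (by norm_num) t).differentiableAt, by simp, ?_⟩
  rw [d1]
  refine contDiff_const.mul ?_
  rw [contDiff_one_iff_deriv]
  refine ⟨fun t => (hasDerivAt_pospow 1 (by norm_num) t).differentiableAt, ?_⟩
  rw [d2]
  fun_prop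

def phi {n : ℕ} (v : En n) : ℝ := max (1 - ‖v‖ ^ 2) 0

lemma phi_cont {n : ℕ} : Continuous (phi (n := n)) := by unfold phi; fun_prop

lemma phi_nonneg {n : ℕ} (v : En n) : 0 ≤ phi v := le_max_right _ _

lemma phi_le_one {n : ℕ} (v : En n) : phi v ≤ 1 := by
  unfold phi; exact max_le (by nlinarith [sq_nonneg ‖v‖]) zero_le_one

lemma phi_zero {n : ℕ} (v : En n) (h : 1 ≤ ‖v‖) : phi v = 0 := by
  unfold phi; exact max_eq_right (by nlinarith)

lemma phi_lower {n : ℕ} (v : En n) (h : ‖v‖ ≤ 1 / 2) : 3 / 4 ≤ phi v := by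
  unfold phi; refine le_max_of_le_left ?_
  nlinarith [norm_nonneg v]

lemma phi_supp {n : ℕ} : HasCompactSupport (phi (n := n)) := by
  refine HasCompactSupport.intro (isCompact_closedBall (0 : En n) 1) fun v hv => phi_zero v ?_
  simp only [mem_closedBall, dist_zero_right, not_le] at hv
  exact hv.le

lemma psi_deriv {n : ℕ} (v : En n) :
    HasFDerivAt (fun v : En n => phi v ^ 2) ((-4 * phi v) • innerSL ℝ v) v := by
  have h1 : HasFDerivAt (fun v : En n => 1 - ‖v‖ ^ 2) (-(2 • innerSL ℝ v)) v := by
    have := (hasStrictFDerivAt_norm_sq v).hasFDerivAt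
    exact this.const_sub 1
  have h2 := (hasDerivAt_pospow 1 le_rfl (1 - ‖v‖ ^ 2)).comp_hasFDerivAt v h1
  have e : (-4 * phi v) • innerSL ℝ v = (((1 + 1 : ℕ) : ℝ) * max (1 - ‖v‖ ^ 2) 0 ^ 1) • -(2 • innerSL ℝ v) := by
    refine ContinuousLinearMap.ext fun i => ?_
    simp [phi]; ring
  rw [e]
  exact h2

lemma fderiv_coord {n : ℕ} (L : En n →L[ℝ] ℝ) (v : En n) :
    L v = ∑ i : Fin n, v i * L (EuclideanSpace.single i 1) := by
  conv_lhs => rw [← (EuclideanSpace.basisFun (Fin n) ℝ).sum_repr v]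
  simp [map_sum]

lemma submean_deriv_nonneg {n : ℕ} {w : En n → ℝ} (hw : ContDiff ℝ 2 w) (x : En n) {R : ℝ}
    (hL : ∀ z ∈ ball x R, 0 ≤ lap w z) {t : ℝ} (ht : 0 ≤ t) (htR : t < R) :
    0 ≤ ∫ v, fderiv ℝ w (x + t • v) v * phi v := by
  let D : Fin n → En n → ℝ := fun i y => fderiv ℝ w y (EuclideanSpace.single i 1)
  have hD : ∀ i, ContDiff ℝ 1 (D i) := by
    intro i
    exact (hw.fderiv_right (m := 1) (by norm_num)).clm_apply contDiff_const
  have hDt : ∀ i, ContDiff ℝ 1 (fun v => D i (x + t • v)) := by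
    intro i
    exact (hD i).comp (by fun_prop)
  have hfd : ∀ i v, fderiv ℝ (fun v => D i (x + t • v)) v (EuclideanSpace.single i 1)
      = t * fderiv ℝ (D i) (x + t • v) (EuclideanSpace.single i 1) := by
    intro i v
    have h1 : HasFDerivAt (fun v : En n => x + t • v) (t • ContinuousLinearMap.id ℝ (En n)) v :=
      ((hasFDerivAt_id v).const_smul t).const_add x
    have h2 := (((hD i).differentiable (by norm_num)) (x + t • v)).hasFDerivAt.comp v h1
    have := h2.fderiv
    rw [show (fun v => D i (x + t • v)) = (D i) ∘ (fun v : En n => x + t • v) from rfl, this]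
    simp
  have hpsi : ∀ i (v : En n), fderiv ℝ (fun v : En n => phi v ^ 2) v (EuclideanSpace.single i 1)
      = -4 * phi v * v i := by
    intro i v
    rw [(psi_deriv v).fderiv]
    simp [EuclideanSpace.inner_single_right]
  have hpsic : HasCompactSupport (fun v : En n => phi v ^ 2) := by
    refine HasCompactSupport.intro (isCompact_closedBall (0 : En n) 1) fun v hv => ?_
    simp only [mem_closedBall, dist_zero_right, not_le] at hv
    rw [phi_zero v hv.le]; simp
  have hpsicont : Continuous (fun v : En n => phi v ^ 2) := phi_cont.pow 2
  have hfdc : ∀ i, Continuous (fun v => fderiv ℝ (fun v => D i (x + t • v)) v (EuclideanSpace.single i 1)) := by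
    intro i
    exact ((hDt i).continuous_fderiv (by norm_num)).clm_apply continuous_const
  have hcoord : ∀ i : Fin n, Continuous (fun v : En n => v i) := by
    intro i; fun_prop
  have ibp : ∀ i, ∫ v, D i (x + t • v) * (v i * phi v)
      = 1 / 4 * ∫ v, (t * fderiv ℝ (D i) (x + t • v) (EuclideanSpace.single i 1)) * phi v ^ 2 := by
    intro i
    have := integral_mul_fderiv_eq_neg_fderiv_mul_of_integrable (μ := (volume : Measure (En n)))
      (f := fun v => D i (x + t • v)) (g := fun v => phi v ^ 2) (v := EuclideanSpace.single i 1)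
      (𝕜 := ℝ) ?_ ?_ ?_ ?_ ?_
    · simp only [hfd, hpsi] at this
      have e : ∀ v : En n, D i (x + t • v) * (v i * phi v) = (-1/4) * (D i (x + t • v) * (-4 * phi v * v i)) := by
        intro v; ring
      simp_rw [e]
      rw [integral_const_mul, this]
      ring
    · exact ((hfdc i).mul hpsicont).integrable_of_hasCompactSupport hpsic.mul_left
    · simp only [hpsi]
      refine Continuous.integrable_of_hasCompactSupport ?_ ?_
      · exact (hDt i).continuous.mul ((continuous_const.mul phi_cont).mul (hcoord i))
      · exact (phi_supp.mul_left.mul_right).mul_left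
    · exact ((hDt i).continuous.mul hpsicont).integrable_of_hasCompactSupport hpsic.mul_left
    · intro v _; exact ((hDt i).differentiable (by norm_num)) v
    · intro v _; exact (psi_deriv v).differentiableAt
  have e1 : ∀ v, fderiv ℝ w (x + t • v) v * phi v = ∑ i, D i (x + t • v) * (v i * phi v) := by
    intro v
    rw [fderiv_coord, Finset.sum_mul]
    refine Finset.sum_congr rfl fun i _ => ?_
    simp only [D]; ring
  simp_rw [e1]
  rw [integral_finsetSum]
  · simp_rw [ibp]
    rw [← Finset.mul_sum, ← integral_finsetSum]
    · refine mul_nonneg (by norm_num) (integral_nonneg fun v => ?_)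
      simp only [Pi.zero_apply]
      rw [← Finset.sum_mul, ← Finset.mul_sum]
      by_cases hv : ‖v‖ < 1
      · refine mul_nonneg (mul_nonneg ht ?_) (by positivity)
        have := hL (x + t • v) (by
          rw [mem_ball, dist_eq_norm, add_sub_cancel_left, norm_smul, Real.norm_of_nonneg ht]
          nlinarith [norm_nonneg v])
        exact this
      · rw [phi_zero v (not_lt.1 hv)]; simp
    · intro i _
      have := hfdc i
      simp only [hfd] at this
      exact (this.mul hpsicont).integrable_of_hasCompactSupport hpsic.mul_left
  · intro i _
    refine Continuous.integrable_of_hasCompactSupport ?_ ?_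
    · exact (hDt i).continuous.mul ((hcoord i).mul phi_cont)
    · exact (phi_supp.mul_left).mul_left

lemma submean {n : ℕ} {w : En n → ℝ} (hw : ContDiff ℝ 2 w) (x : En n) {R : ℝ} (hR : 0 < R)
    (hL : ∀ z ∈ ball x R, 0 ≤ lap w z) :
    w x * ∫ v : En n, phi v ≤ ∫ v, w (x + R • v) * phi v := by
  have hder : ∀ t : ℝ, HasDerivAt (fun t : ℝ => ∫ v, w (x + t • v) * phi v)
      (∫ v, fderiv ℝ w (x + t • v) v * phi v) t := by
    intro t
    have hfc : Continuous (fderiv ℝ w) := hw.continuous_fderiv (by norm_num)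
    obtain ⟨C, hC⟩ := (isCompact_closedBall x (|t| + 1)).exists_bound_of_continuousOn hfc.continuousOn
    have hCw : Continuous w := hw.continuous
    refine (hasDerivAt_integral_of_dominated_loc_of_deriv_le (𝕜 := ℝ)
      (F := fun t v => w (x + t • v) * phi v) (F' := fun t v => fderiv ℝ w (x + t • v) v * phi v)
      (bound := fun v => C * phi v) (ball_mem_nhds t one_pos) ?_ ?_ ?_ ?_ ?_ ?_).2
    · refine Filter.Eventually.of_forall fun s => ?_
      exact ((hCw.comp (by fun_prop)).mul phi_cont).aestronglyMeasurable
    · exact ((hCw.comp (by fun_prop)).mul phi_cont).integrable_of_hasCompactSupport phi_supp.mul_left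
    · exact (((hfc.comp (by fun_prop)).clm_apply continuous_id).mul phi_cont).aestronglyMeasurable
    · refine Filter.Eventually.of_forall fun v s hs => ?_
      by_cases hv : ‖v‖ < 1
      · rw [norm_mul, Real.norm_of_nonneg (phi_nonneg v)]
        refine mul_le_mul_of_nonneg_right ?_ (phi_nonneg v)
        have hs' : |s| ≤ |t| + 1 := by
          rw [mem_ball, Real.dist_eq] at hs
          have := abs_add_le (s - t) t
          simp only [sub_add_cancel] at this
          linarith
        have h1 := hC (x + s • v) (by
          rw [mem_closedBall, dist_eq_norm, add_sub_cancel_left, norm_smul, Real.norm_eq_abs]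
          nlinarith [norm_nonneg v, abs_nonneg s])
        calc ‖fderiv ℝ w (x + s • v) v‖ ≤ ‖fderiv ℝ w (x + s • v)‖ * ‖v‖ := ContinuousLinearMap.le_opNorm _ _
          _ ≤ ‖fderiv ℝ w (x + s • v)‖ * 1 := by gcongr
          _ ≤ C := by rw [mul_one]; exact h1
      · rw [phi_zero v (not_lt.1 hv)]; simp
    · exact (phi_cont.integrable_of_hasCompactSupport phi_supp).const_mul C
    · refine Filter.Eventually.of_forall fun v s _ => ?_
      have h1 : HasDerivAt (fun s : ℝ => x + s • v) v s := by
        have := ((hasDerivAt_id s).smul_const v).const_add x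
        simpa using this
      have h2 := ((hw.differentiable (by norm_num)) (x + s • v)).hasFDerivAt.comp_hasDerivAt s h1
      exact h2.mul_const _
  have hmono : MonotoneOn (fun t : ℝ => ∫ v, w (x + t • v) * phi v) (Icc 0 R) := by
    refine monotoneOn_of_deriv_nonneg (convex_Icc 0 R) ?_ ?_ ?_
    · exact fun t _ => (hder t).continuousAt.continuousWithinAt
    · exact fun t _ => (hder t).differentiableAt.differentiableWithinAt
    · intro t ht
      rw [interior_Icc] at ht
      rw [(hder t).deriv]
      exact submean_deriv_nonneg hw x hL ht.1.le ht.2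
  have := hmono (left_mem_Icc.2 hR.le) (right_mem_Icc.2 hR.le) hR.le
  simp only [zero_smul, add_zero, integral_const_mul] at this
  exact this


lemma lap_congr {n : ℕ} {w g : En n → ℝ} {x : En n} (h : w =ᶠ[nhds x] g) : lap w x = lap g x := by
  unfold lap
  refine Finset.sum_congr rfl fun i _ => ?_
  have h1 : (fun y => fderiv ℝ w y (EuclideanSpace.single i 1)) =ᶠ[nhds x]
      (fun y => fderiv ℝ g y (EuclideanSpace.single i 1)) := by
    filter_upwards [h.fderiv (𝕜 := ℝ)] with y hy
    rw [hy]
  rw [h1.fderiv_eq]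

lemma lap_neg {n : ℕ} (w : En n → ℝ) (x : En n) : lap (fun y => - w y) x = - lap w x := by
  unfold lap
  rw [← Finset.sum_neg_distrib]
  refine Finset.sum_congr rfl fun i _ => ?_
  have : (fun y => fderiv ℝ (fun y => - w y) y (EuclideanSpace.single i 1)) =
      fun y => - (fderiv ℝ w y (EuclideanSpace.single i 1)) := by
    ext y
    rw [fderiv_fun_neg]; simp
  rw [this, fderiv_fun_neg]; simp

lemma lap_zero {n : ℕ} (x : En n) : lap (fun _ : En n => (0:ℝ)) x = 0 := by
  unfold lap; simp

lemma harm_mean {n : ℕ} {U : Set (En n)} (hU : IsOpen U) {h : En n → ℝ} (hh : IsHarmonicOn h U)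
    {x : En n} {R : ℝ} (hR : 0 < R) (hB : closedBall x (2 * R) ⊆ U) :
    h x * ∫ v : En n, phi v = ∫ v, h (x + R • v) * phi v := by
  let b : ContDiffBump x := ⟨3 / 2 * R, 2 * R, by linarith, by linarith⟩
  let w : En n → ℝ := fun y => b y * h y
  have hw : ContDiff ℝ 2 w := by
    rw [contDiff_iff_contDiffAt]
    intro y
    by_cases hy : y ∈ U
    · exact b.contDiffAt.mul (hh.1.contDiffAt (hU.mem_nhds hy))
    · have : y ∈ (closedBall x (2 * R))ᶜ := fun hc => hy (hB hc)
      refine (contDiffAt_const (c := (0:ℝ))).congr_of_eventuallyEq ?_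
      filter_upwards [isClosed_closedBall.isOpen_compl.mem_nhds this] with z hz
      have : b z = 0 := b.zero_of_le_dist (by
        simp only [mem_compl_iff, mem_closedBall, not_le] at hz; exact hz.le)
      simp [w, this]
  have hwh : ∀ z ∈ ball x (3 / 2 * R), w z = h z := by
    intro z hz
    have : b z = 1 := b.one_of_mem_closedBall (ball_subset_closedBall hz)
    simp [w, this]
  have hlap : ∀ z ∈ ball x R, lap w z = 0 := by
    intro z hz
    have hz' : z ∈ ball x (3 / 2 * R) := ball_subset_ball (by linarith) hz
    rw [lap_congr (g := h)]
    · exact hh.2 z (hB (ball_subset_closedBall (ball_subset_ball (by linarith) hz)))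
    · filter_upwards [isOpen_ball.mem_nhds hz'] with y hy using hwh y hy
  have h1 := submean hw x hR (fun z hz => (hlap z hz).ge)
  have h2 := submean hw.neg x hR (fun z hz => by rw [lap_neg, hlap z hz]; simp)
  have e1 : w x = h x := hwh x (mem_ball_self (by linarith))
  have e2 : ∫ v, w (x + R • v) * phi v = ∫ v, h (x + R • v) * phi v := by
    refine integral_congr_ae (Filter.Eventually.of_forall fun v => ?_)
    simp only
    by_cases hv : ‖v‖ < 1
    · rw [hwh]
      rw [mem_ball, dist_eq_norm, add_sub_cancel_left, norm_smul, Real.norm_of_nonneg hR.le]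
      nlinarith
    · rw [phi_zero v (not_lt.1 hv)]; simp
  simp only [neg_mul, integral_neg] at h2
  rw [e1, e2] at h1 h2
  linarith

lemma phi_int_pos {n : ℕ} : 0 < ∫ v : En n, phi v := by
  refine (integral_pos_iff_support_of_nonneg phi_nonneg
    (phi_cont.integrable_of_hasCompactSupport phi_supp)).2 ?_
  refine lt_of_lt_of_le (measure_ball_pos volume (0 : En n) (show (0:ℝ) < 1/2 by norm_num))
    (measure_mono fun v hv => ?_)
  simp only [mem_ball, dist_zero_right] at hv
  have := phi_lower v hv.le
  simp only [Function.mem_support]; linarith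

lemma harnack {n : ℕ} {U : Set (En n)} (hU : IsOpen U) {h : En n → ℝ} (hh : IsHarmonicOn h U)
    (hpos : ∀ z ∈ U, 0 < h z)
    {x y : En n} {R : ℝ} (hR : 0 < R) (hB : closedBall x (8 * R) ⊆ U) (hxy : dist x y ≤ R) :
    h y ≤ 4 ^ n * (4 / 3) * h x := by
  have hx := harm_mean hU hh (R := 4 * R) (x := x) (by linarith)
    (by convert hB using 2; ring)
  have hy := harm_mean hU hh (R := R) (x := y) hR (by
    refine subset_trans (closedBall_subset_closedBall' ?_) hB
    rw [dist_comm]; linarith)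
  set a : En n := (1 / (4 * R)) • (y - x) with ha
  have hna : ‖a‖ ≤ 1 / 4 := by
    rw [ha, norm_smul, Real.norm_of_nonneg (by positivity), ← dist_eq_norm, dist_comm]
    rw [div_mul_eq_mul_div, one_mul, div_le_div_iff₀ (by linarith) (by norm_num)]
    linarith
  have hcont : ∀ {p : En n} {S : ℝ}, 0 < S → closedBall p S ⊆ U →
      Integrable (fun v => h (p + S • v) * phi v) := by
    intro p S hS hpS
    have hc : ContinuousOn (fun v => h (p + S • v) * phi v) (closedBall 0 1) := by
      refine ContinuousOn.mul (hh.1.continuousOn.comp (by fun_prop) ?_) phi_cont.continuousOn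
      intro v hv
      apply hpS
      simp only [mem_closedBall, dist_zero_right] at hv
      rw [mem_closedBall, dist_eq_norm, add_sub_cancel_left, norm_smul, Real.norm_of_nonneg hS.le]
      nlinarith
    have h1 := hc.integrableOn_compact (μ := volume) (isCompact_closedBall (0 : En n) 1)
    refine (integrableOn_iff_integrable_of_support_subset ?_).1 h1
    intro v hv
    by_contra hcon
    simp only [mem_closedBall, dist_zero_right, not_le] at hcon
    exact hv (by simp [phi_zero v hcon.le])
  have hIx : Integrable (fun v => h (x + (4 * R) • v) * phi v) :=
    hcont (by linarith) (subset_trans (closedBall_subset_closedBall (by linarith)) hB)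
  have hIy : Integrable (fun v => h (y + R • v) * phi v) :=
    hcont hR (subset_trans (closedBall_subset_closedBall' (by rw [dist_comm]; linarith)) hB)
  have e1 : ∫ v, h (x + (4 * R) • v) * phi v = (1 / 4) ^ n *
      ∫ u, h (y + R • u) * phi (a + (1 / 4 : ℝ) • u) := by
    rw [← integral_add_left_eq_self (fun v => h (x + (4 * R) • v) * phi v) a]
    have := Measure.integral_comp_inv_smul_of_nonneg (volume : Measure (En n))
      (fun v => h (x + (4 * R) • (a + v)) * phi (a + v)) (R := 4) (by norm_num)
    simp only [finrank_euclideanSpace, Fintype.card_fin, smul_eq_mul] at this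
    have e2 : ∀ u : En n, x + (4 * R) • (a + (4:ℝ)⁻¹ • u) = y + R • u := by
      intro u
      rw [ha, smul_add, smul_smul, smul_smul]
      rw [show 4 * R * (1 / (4 * R)) = 1 by field_simp, show 4 * R * (4:ℝ)⁻¹ = R by ring, one_smul]
      abel
    simp only [e2] at this
    simp only [one_div]
    rw [this, ← mul_assoc, ← mul_pow]; norm_num
  have hIu : Integrable (fun u => h (y + R • u) * phi (a + (1 / 4 : ℝ) • u)) := by
    have i1 := (hIx.comp_add_left a).comp_smul (R := (1/4 : ℝ)) (by norm_num)
    refine i1.congr (Filter.Eventually.of_forall fun u => ?_)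
    simp only
    have e2 : x + (4 * R) • (a + (1/4:ℝ) • u) = y + R • u := by
      rw [ha, smul_add, smul_smul, smul_smul]
      rw [show 4 * R * (1 / (4 * R)) = 1 by field_simp, show 4 * R * (1/4:ℝ) = R by ring, one_smul]
      abel
    rw [e2]
  have key : 3 / 4 * ∫ v, h (y + R • v) * phi v ≤ ∫ u, h (y + R • u) * phi (a + (1 / 4 : ℝ) • u) := by
    rw [← integral_const_mul]
    refine integral_mono (hIy.const_mul _) hIu fun u => ?_
    simp only
    by_cases hu : ‖u‖ < 1
    · have hp : 0 ≤ h (y + R • u) := by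
        refine (hpos _ (hB ?_)).le
        rw [mem_closedBall]
        have := dist_triangle (y + R • u) y x
        rw [dist_eq_norm (y + R • u) y, add_sub_cancel_left, norm_smul, Real.norm_of_nonneg hR.le, dist_comm y x] at this
        nlinarith
      have h1 : 3 / 4 ≤ phi (a + (1 / 4 : ℝ) • u) := by
        refine phi_lower _ ((norm_add_le _ _).trans ?_)
        have e9 : ‖(1 / 4 : ℝ) • u‖ = 1 / 4 * ‖u‖ := by
          rw [norm_smul, Real.norm_of_nonneg (by norm_num)]
        rw [e9]
        linarith
      have h2 := phi_le_one u
      have h3 := phi_nonneg u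
      calc 3 / 4 * (h (y + R • u) * phi u) ≤ 3 / 4 * (h (y + R • u) * 1) := by gcongr
        _ = h (y + R • u) * (3 / 4) := by ring
        _ ≤ _ := by gcongr
    · rw [phi_zero u (not_lt.1 hu)]
      simp only [mul_zero]
      by_cases hv : ‖a + (1 / 4 : ℝ) • u‖ < 1
      · refine mul_nonneg (hpos _ (hB ?_)).le (phi_nonneg _)
        have e2 : x + (4 * R) • (a + (1/4:ℝ) • u) = y + R • u := by
          rw [ha, smul_add, smul_smul, smul_smul]
          rw [show 4 * R * (1 / (4 * R)) = 1 by field_simp, show 4 * R * (1/4:ℝ) = R by ring, one_smul]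
          abel
        rw [← e2, mem_closedBall, dist_eq_norm, add_sub_cancel_left, norm_smul, Real.norm_of_nonneg (by linarith)]
        nlinarith
      · rw [phi_zero _ (not_lt.1 hv)]; simp
  rw [← hy] at key
  rw [e1] at hx
  have hI := phi_int_pos (n := n)
  have h4 : (0:ℝ) < (1/4)^n := by positivity
  have : (1 / 4 : ℝ) ^ n * (3 / 4 * (h y * ∫ v : En n, phi v)) ≤ h x * ∫ v : En n, phi v := by
    rw [hx]; exact mul_le_mul_of_nonneg_left key h4.le
  have h5 : (1 / 4 : ℝ) ^ n * (3 / 4) * h y ≤ h x := by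
    refine le_of_mul_le_mul_right ?_ hI
    linarith
  have h6 : h y = 4 ^ n * (4 / 3) * ((1 / 4 : ℝ) ^ n * (3 / 4) * h y) := by
    have : (4:ℝ) ^ n * (1 / 4) ^ n = 1 := by rw [← mul_pow]; norm_num
    linear_combination (- h y) * this
  rw [h6]
  exact mul_le_mul_of_nonneg_left h5 (by positivity)

lemma lap_cut {n : ℕ} {g : En n → ℝ} {U : Set (En n)} (hU : IsOpen U) (hg : IsHarmonicOn g U)
    (K : ℝ) {y : En n} (hy : y ∈ U) : 0 ≤ lap (fun z => (max (g z - K) 0) ^ 3) y := by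
  unfold lap
  have hg1 : ∀ z ∈ U, HasFDerivAt g (fderiv ℝ g z) z := fun z hz =>
    ((hg.1.contDiffAt (hU.mem_nhds hz)).differentiableAt (by norm_num)).hasFDerivAt
  have hP : ∀ k : ℕ, 1 ≤ k → ∀ z ∈ U, HasFDerivAt (fun z => (max (g z - K) 0) ^ (k + 1))
      ((((k + 1 : ℕ) : ℝ) * (max (g z - K) 0) ^ k) • fderiv ℝ g z) z := by
    intro k hk z hz
    exact (hasDerivAt_pospow k hk (g z - K)).comp_hasFDerivAt z ((hg1 z hz).sub_const K)
  have key : ∀ i : Fin n, fderiv ℝ (fun y => fderiv ℝ (fun z => (max (g z - K) 0) ^ 3) y (EuclideanSpace.single i 1)) y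
      (EuclideanSpace.single i 1) = 6 * max (g y - K) 0 * (fderiv ℝ g y (EuclideanSpace.single i 1)) ^ 2 +
        3 * (max (g y - K) 0) ^ 2 *
        fderiv ℝ (fun y => fderiv ℝ g y (EuclideanSpace.single i 1)) y (EuclideanSpace.single i 1) := by
    intro i
    have e : (fun y => fderiv ℝ (fun z => (max (g z - K) 0) ^ 3) y (EuclideanSpace.single i 1)) =ᶠ[nhds y]
        fun y => (3 * (max (g y - K) 0) ^ 2) * fderiv ℝ g y (EuclideanSpace.single i 1) := by
      filter_upwards [hU.mem_nhds hy] with z hz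
      have := (hP 2 (by norm_num) z hz).fderiv
      norm_num at this
      rw [this]
      simp
    rw [e.fderiv_eq]
    have d1 := ((hP 1 le_rfl y hy)).const_mul 3
    have d2 : DifferentiableAt ℝ (fun y => fderiv ℝ g y (EuclideanSpace.single i 1)) y := by
      have := ((hg.1.contDiffAt (hU.mem_nhds hy)).fderiv_right (m := 1) (by norm_num)).differentiableAt (by norm_num)
      exact this.clm_apply (differentiableAt_const _)
    have d3 := (d1.mul d2.hasFDerivAt).fderiv
    have d4 : (fun y => (3 * (max (g y - K) 0) ^ 2) * fderiv ℝ g y (EuclideanSpace.single i 1)) =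
      (fun y => 3 * max (g y - K) 0 ^ (1 + 1)) * fun y => fderiv ℝ g y (EuclideanSpace.single i 1) := rfl
    rw [d4, d3]
    simp
    ring
  simp_rw [key]
  rw [Finset.sum_add_distrib, ← Finset.mul_sum]
  have := hg.2 y hy
  unfold lap at this
  rw [← Finset.mul_sum, this, mul_zero, add_zero]
  exact mul_nonneg (mul_nonneg (by norm_num) (le_max_right _ _)) (Finset.sum_nonneg fun i _ => sq_nonneg _)

lemma submean_cube {n : ℕ} {U : Set (En n)} (hU : IsOpen U) {h : En n → ℝ} (hh : IsHarmonicOn h U)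
    (hc : ContinuousOn h (closure U)) (hpos : ∀ z ∈ U, 0 < h z) (h0 : ∀ z ∈ frontier U, h z = 0)
    {y : En n} (hy : y ∈ U) {R : ℝ} (hR : 0 < R) :
    h y ^ 3 * ∫ v : En n, phi v ≤ ∫ v, (U.indicator h (y + R • v)) ^ 3 * phi v := by
  set g := U.indicator h with hg
  have gc : Continuous g := continuous_indicator h0 hc
  have g0 : ∀ z, 0 ≤ g z := fun z => indicator_nonneg (fun z hz => (hpos z hz).le) z
  have hgU : ∀ z ∈ U, g =ᶠ[nhds z] h := fun z hz => by
    filter_upwards [hU.mem_nhds hz] with p hp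
    exact indicator_of_mem hp h
  have step : ∀ K : ℝ, 0 < K → (max (g y - K) 0) ^ 3 * ∫ v : En n, phi v ≤
      ∫ v, (g (y + R • v)) ^ 3 * phi v := by
    intro K hK
    have hoff : ∀ z, z ∉ U → (fun z => (max (g z - K) 0) ^ 3) =ᶠ[nhds z] fun _ => 0 := by
      intro z hz
      have : g z < K := by rw [hg, indicator_of_notMem hz]; exact hK
      filter_upwards [gc.continuousAt.eventually_lt_const this] with p hp
      rw [max_eq_right (by linarith)]; simp
    have hon : ∀ z ∈ U, (fun z => (max (g z - K) 0) ^ 3) =ᶠ[nhds z] fun z => (max (h z - K) 0) ^ 3 := by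
      intro z hz
      filter_upwards [hgU z hz] with p hp
      rw [hp]
    have hw : ContDiff ℝ 2 (fun z => (max (g z - K) 0) ^ 3) := by
      rw [contDiff_iff_contDiffAt]
      intro z
      by_cases hz : z ∈ U
      · refine ContDiffAt.congr_of_eventuallyEq ?_ (hon z hz)
        exact contDiff_pospow.contDiffAt.comp z
          ((hh.1.contDiffAt (hU.mem_nhds hz)).sub contDiffAt_const)
      · exact contDiffAt_const.congr_of_eventuallyEq (hoff z hz)
    have := submean hw y hR (fun z _ => by
      by_cases hz : z ∈ U
      · rw [lap_congr (hon z hz)]; exact lap_cut hU hh K hz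
      · rw [lap_congr (hoff z hz), lap_zero])
    refine this.trans (integral_mono ?_ ?_ ?_)
    · exact (((hw.continuous).comp (by fun_prop)).mul phi_cont).integrable_of_hasCompactSupport phi_supp.mul_left
    · exact (((gc.comp (by fun_prop)).pow 3).mul phi_cont).integrable_of_hasCompactSupport phi_supp.mul_left
    · intro v
      simp only
      refine mul_le_mul_of_nonneg_right ?_ (phi_nonneg v)
      exact pow_le_pow_left₀ (le_max_right _ _) (max_le (by linarith) (g0 _)) 3
  have hgy : g y = h y := indicator_of_mem hy h
  have hlim : Filter.Tendsto (fun K : ℝ => (max (g y - K) 0) ^ 3 * ∫ v : En n, phi v) (nhdsWithin 0 (Ioi 0))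
      (nhds ((max (g y - 0) 0) ^ 3 * ∫ v : En n, phi v)) := by
    refine Filter.Tendsto.mono_left ?_ nhdsWithin_le_nhds
    refine Continuous.tendsto (f := fun K : ℝ => (max (g y - K) 0) ^ 3 * ∫ v : En n, phi v) ?_ 0
    fun_prop
  rw [sub_zero, max_eq_left (g0 y), hgy] at hlim
  refine le_of_tendsto hlim ?_
  filter_upwards [self_mem_nhdsWithin] with K hK
  have := step K hK
  rwa [hgy] at this


lemma harnack_chain {n : ℕ} {cu Cu K : ℝ} (hcu : 0 < cu) (hcu1 : cu < 1) (hCu : 1 < Cu) (hK : 0 < K) :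
    ∃ γ : ℕ, 1 ≤ γ ∧ ∀ U : Set (En n), IsUniformDomain cu Cu U → ∀ h : En n → ℝ, IsHarmonicOn h U →
      (∀ z ∈ U, 0 < h z) → ∀ a ∈ U, ∀ b ∈ U, ∀ s, 0 < s → s ≤ infDist a (frontier U) →
        s ≤ infDist b (frontier U) → dist a b ≤ K * s → h a ≤ 2 ^ γ * h b := by
  obtain ⟨N, hN⟩ := connect (n := n) (e := cu / 32) hcu hcu1 hCu hK (by positivity)
  set M : ℝ := 4 ^ n * (4 / 3) with hM
  have hM1 : 1 ≤ M := by
    have : (1:ℝ) ≤ 4 ^ n := one_le_pow₀ (by norm_num)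
    rw [hM]; nlinarith
  obtain ⟨γ, hγ⟩ := pow_unbounded_of_one_lt (M ^ N) (show (1:ℝ) < 2 by norm_num)
  refine ⟨γ + 1, by omega, ?_⟩
  intro U hU h hh hpos a ha b hb s hs hsa hsb hab
  obtain ⟨q, q0, qN, hq1, hq2⟩ := hN U hU b hb a ha s hs hsb hsa (by rwa [dist_comm])
  have hstep : ∀ i, h (q i) ≤ M ^ i * h b := by
    intro i
    induction i with
    | zero => rw [q0]; simp
    | succ i ih =>
      have := harnack hU.1 hh hpos (x := q i) (y := q (i + 1)) (R := cu / 32 * s) (by positivity) ?_ (hq1 i)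
      · refine this.trans ?_
        rw [pow_succ']
        rw [hM, mul_assoc (4 ^ n * (4 / 3) : ℝ)]
        exact mul_le_mul_of_nonneg_left ih (by positivity)
      · refine subset_trans ?_ (ball_infDist_subset hU.1 (hq2 i).1)
        refine closedBall_subset_ball ?_
        have := (hq2 i).2.1
        have : 0 < cu * s := by positivity
        linarith
  have h1 := hstep N
  rw [qN] at h1
  refine h1.trans (mul_le_mul_of_nonneg_right ?_ (hpos b hb).le)
  rw [pow_succ]
  have : (0:ℝ) < 2 ^ γ := by positivity
  linarith

lemma infDist_ge_of_ball {n : ℕ} {U : Set (En n)} {p q : En n} {d D : ℝ}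
    (hp : D ≤ infDist p (frontier U)) (hq : dist q p ≤ d) : D - d ≤ infDist q (frontier U) := by
  have := infDist_le_infDist_add_dist (s := frontier U) (x := p) (y := q)
  rw [dist_comm] at this
  linarith

lemma chain_growth {n : ℕ} {cu Cu C : ℝ} (hcu : 0 < cu) (hcu1 : cu < 1) (hCu : 1 < Cu) (hC : 0 < C) :
    ∃ γ : ℕ, 1 ≤ γ ∧ ∀ U : Set (En n), IsUniformDomain cu Cu U → ¬ Bornology.IsBounded U →
      ∀ h : En n → ℝ, IsHarmonicOn h U →
      (∀ z ∈ U, 0 < h z) → ∀ z ∈ U, ∀ ρ, 0 < ρ → ρ ≤ infDist z (frontier U) → ∀ k : ℕ,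
      ∀ y ∈ U, (1 / 2) ^ k * ρ ≤ infDist y (frontier U) → dist y z ≤ C * ρ →
        h y ≤ (2 ^ γ) ^ (k + 1) * h z := by
  obtain ⟨γ, hγ, H⟩ := harnack_chain (n := n) (K := C + 2 / cu) hcu hcu1 hCu (by positivity)
  refine ⟨γ, hγ, ?_⟩
  intro U hU hnb h hh hpos z hz ρ hρ hρz
  have main : ∀ k : ℕ, ∀ y ∈ U, (1 / 2) ^ k * ρ ≤ infDist y (frontier U) →
      dist y z ≤ (C + 2 / cu * (1 / 2) ^ k) * ρ → h y ≤ (2 ^ γ) ^ (k + 1) * h z := by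
    intro k
    induction k with
    | zero =>
      intro y hy hδ hd
      simp only [pow_zero, one_mul, mul_one, zero_add, pow_one] at *
      exact H U hU h hh hpos y hy z hz ρ hρ hδ hρz hd
    | succ k ih =>
      intro y hy hδ hd
      have hd0 : 0 < (1 / 2 : ℝ) ^ k * ρ := by positivity
      obtain ⟨p, hp, hyp, hδp, -⟩ := corkscrew hcu hU hnb hy (R := 2 * ((1 / 2) ^ k * ρ) / cu) (by positivity)
      have e1 : cu * (2 * ((1 / 2) ^ k * ρ) / cu) / 2 = (1 / 2) ^ k * ρ := by field_simp
      rw [e1] at hδp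
      have e2 : 2 * ((1 / 2) ^ k * ρ) / cu / 2 = 1 / cu * (1 / 2) ^ k * ρ := by field_simp
      rw [e2] at hyp
      have h1 := ih p hp hδp (by
        have := dist_triangle p y z
        rw [dist_comm p y] at this
        refine this.trans ((add_le_add hyp hd).trans (le_of_eq ?_))
        rw [pow_succ]; ring)
      have h2 := H U hU h hh hpos y hy p hp ((1 / 2) ^ (k + 1) * ρ) (by positivity) hδ (by
        refine le_trans ?_ hδp
        rw [pow_succ]; linarith) (by
        refine hyp.trans ?_
        have : 1 / cu * (1 / 2) ^ k * ρ = 2 / cu * ((1 / 2) ^ (k + 1) * ρ) := by rw [pow_succ]; ring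
        rw [this]
        refine mul_le_mul_of_nonneg_right (by linarith) (by positivity))
      refine h2.trans ?_
      rw [pow_succ _ (k + 1), mul_comm _ (2 ^ γ), mul_assoc]
      exact mul_le_mul_of_nonneg_left h1 (by positivity)
  intro k y hy hδ hd
  refine main k y hy hδ (hd.trans ?_)
  refine mul_le_mul_of_nonneg_right ?_ hρ.le
  have : 0 ≤ 2 / cu * (1 / 2) ^ k := by positivity
  linarith

set_option maxHeartbeats 1000000 in
lemma growth {n : ℕ} {A : ℝ} (hA : 0 < A) : ∃ ε : ℝ, 0 < ε ∧ ∀ U : Set (En n), IsOpen U →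
    ∀ h : En n → ℝ, IsHarmonicOn h U → ContinuousOn h (closure U) → (∀ z ∈ U, 0 < h z) →
    (∀ z ∈ frontier U, h z = 0) → ∀ y ∈ U, ∀ d, 0 < d → ∀ p, dist p y + d ≤ A * d / 2 →
    (∀ q ∈ ball p d, q ∈ U → h q ≤ h y / 2) → ∃ y' ∈ U, dist y' y ≤ A * d ∧ (1 + ε) * h y ≤ h y' := by
  set I := ∫ v : En n, phi v with hI
  have hI0 : 0 < I := phi_int_pos
  set V := (volume : Measure (En n)).real (ball 0 (1 / A)) with hV
  have hV0 : 0 < V := by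
    rw [hV, Measure.real]
    exact ENNReal.toReal_pos (measure_ball_pos _ _ (by positivity)).ne' measure_ball_lt_top.ne
  refine ⟨min 1 (V / (14 * I)), by positivity, ?_⟩
  intro U hU h hh hc hpos h0 y hy d hd p hp hpd
  set ε := min 1 (V / (14 * I)) with hε
  have hε0 : 0 < ε := by positivity
  have hε1 : ε ≤ 1 := min_le_left _ _
  have hε2 : ε * (14 * I) ≤ V := by
    rw [← le_div_iff₀ (by positivity)]; exact min_le_right _ _
  by_contra hcon
  push Not at hcon
  have hyp := hpos y hy
  set g := U.indicator h with hg
  have gc : Continuous g := continuous_indicator h0 hc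
  have g0 : ∀ z, 0 ≤ g z := fun z => indicator_nonneg (fun z hz => (hpos z hz).le) z
  have hR : 0 < A * d := by positivity
  have hs := submean_cube hU hh hc hpos h0 hy hR
  rw [← hg, ← hI] at hs
  set w : En n := (1 / (A * d)) • (p - y) with hw
  set E : Set (En n) := ball w (1 / A) with hE
  have hVE : (volume : Measure (En n)).real E = V := by
    rw [hE, hV, Measure.real, Measure.real, Measure.addHaar_ball_center]
  have hEmem : ∀ v ∈ E, y + (A * d) • v ∈ ball p d ∧ ‖v‖ ≤ 1 / 2 := by
    intro v hv
    have e : y + (A * d) • v - p = (A * d) • (v - w) := by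
      rw [hw, smul_sub, smul_smul, show A * d * (1 / (A * d)) = 1 by field_simp, one_smul]; abel
    rw [hE, mem_ball, dist_eq_norm] at hv
    have h1 : y + (A * d) • v ∈ ball p d := by
      rw [mem_ball, dist_eq_norm, e, norm_smul, Real.norm_of_nonneg hR.le]
      calc A * d * ‖v - w‖ < A * d * (1 / A) := by gcongr
        _ = d := by field_simp
    refine ⟨h1, ?_⟩
    have h2 := dist_triangle (y + (A * d) • v) p y
    rw [dist_eq_norm (y + (A * d) • v) y, add_sub_cancel_left, norm_smul, Real.norm_of_nonneg hR.le] at h2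
    rw [mem_ball] at h1
    have : A * d * ‖v‖ ≤ A * d * (1 / 2) := by linarith
    exact le_of_mul_le_mul_left this hR
  have hgi1 : Integrable (fun v : En n => (1 + ε) ^ 3 * h y ^ 3 * phi v) :=
    (phi_cont.integrable_of_hasCompactSupport phi_supp).const_mul _
  have hgi2 : Integrable (E.indicator (fun _ : En n => 21 / 32 * h y ^ 3)) :=
    (integrable_indicator_iff measurableSet_ball).2
      (integrableOn_const measure_ball_lt_top.ne)
  have hle : ∫ v, (g (y + (A * d) • v)) ^ 3 * phi v ≤
      ∫ v, ((1 + ε) ^ 3 * h y ^ 3 * phi v - E.indicator (fun _ : En n => 21 / 32 * h y ^ 3) v) := by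
    refine integral_mono ?_ (hgi1.sub hgi2) fun v => ?_
    · exact (((gc.comp (by fun_prop)).pow 3).mul phi_cont).integrable_of_hasCompactSupport phi_supp.mul_left
    · simp only
      have hp0 := phi_nonneg v
      have h1 : (1:ℝ) ≤ (1 + ε) ^ 3 := one_le_pow₀ (by linarith)
      have h3 : 0 < h y ^ 3 := by positivity
      by_cases hv : v ∈ E
      · obtain ⟨hm, hn2⟩ := hEmem v hv
        have hp1 := phi_lower v hn2
        rw [indicator_of_mem hv]
        have hgle : g (y + (A * d) • v) ≤ h y / 2 := by
          by_cases hU' : y + (A * d) • v ∈ U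
          · rw [hg, indicator_of_mem hU']; exact hpd _ hm hU'
          · rw [hg, indicator_of_notMem hU']; positivity
        have hgc : g (y + (A * d) • v) ^ 3 ≤ h y ^ 3 / 8 := by
          refine (pow_le_pow_left₀ (g0 _) hgle 3).trans (le_of_eq (by ring))
        have a1 : g (y + (A * d) • v) ^ 3 * phi v ≤ h y ^ 3 / 8 * phi v :=
          mul_le_mul_of_nonneg_right hgc hp0
        have a2 : 1 * (h y ^ 3 * phi v) ≤ (1 + ε) ^ 3 * (h y ^ 3 * phi v) :=
          mul_le_mul_of_nonneg_right h1 (by positivity)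
        have a3 : 3 / 4 * h y ^ 3 ≤ phi v * h y ^ 3 := mul_le_mul_of_nonneg_right hp1 h3.le
        linarith
      · rw [indicator_of_notMem hv, sub_zero]
        by_cases hv1 : ‖v‖ < 1
        · refine mul_le_mul_of_nonneg_right ?_ hp0
          rw [← mul_pow]
          refine pow_le_pow_left₀ (g0 _) ?_ 3
          by_cases hU' : y + (A * d) • v ∈ U
          · rw [hg, indicator_of_mem hU']
            refine (hcon _ hU' ?_).le
            rw [dist_eq_norm, add_sub_cancel_left, norm_smul, Real.norm_of_nonneg hR.le]
            exact mul_le_of_le_one_right hR.le hv1.le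
          · rw [hg, indicator_of_notMem hU']; exact mul_nonneg (by linarith) hyp.le
        · rw [phi_zero v (not_lt.1 hv1)]; simp
  rw [integral_sub hgi1 hgi2, integral_const_mul, integral_indicator measurableSet_ball,
    setIntegral_const, hVE, ← hI, smul_eq_mul] at hle
  have h3 : 0 < h y ^ 3 := by positivity
  have := hs.trans hle
  have h4 : h y ^ 3 * I ≤ h y ^ 3 * ((1 + ε) ^ 3 * I - V * (21 / 32)) := by linarith
  have h5 := le_of_mul_le_mul_left h4 h3
  have h6 : (1 + ε) ^ 3 ≤ 1 + 7 * ε := by nlinarith [mul_nonneg hε0.le (sub_nonneg.2 hε1), mul_nonneg (sq_nonneg ε) (sub_nonneg.2 hε1)]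
  have h7 : (1 + ε) ^ 3 * I ≤ (1 + 7 * ε) * I := mul_le_mul_of_nonneg_right h6 hI0.le
  linarith

set_option maxHeartbeats 1000000 in
lemma carleson {n : ℕ} {cu Cu C0 : ℝ} (hcu : 0 < cu) (hcu1 : cu < 1) (hCu : 1 < Cu) (hC0 : 0 < C0) :
    ∃ C1 : ℝ, 0 < C1 ∧ ∀ U : Set (En n), IsUniformDomain cu Cu U → ¬ Bornology.IsBounded U →
      ∀ h : En n → ℝ, IsHarmonicOn h U → ContinuousOn h (closure U) →
      (∀ z ∈ U, 0 < h z) → (∀ z ∈ frontier U, h z = 0) →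
      ∀ z ∈ U, ∀ ρ, 0 < ρ → ρ ≤ infDist z (frontier U) →
      ∀ y ∈ U, dist y z ≤ C0 * ρ → h y ≤ C1 * h z := by
  obtain ⟨γ, hγ, hchain⟩ := chain_growth (n := n) (C := C0 + 1 + 2 / cu + 1) hcu hcu1 hCu (by positivity)
  set A : ℝ := 8 / cu with hA
  have hA0 : 0 < A := by positivity
  obtain ⟨ε, hε, hgrow⟩ := growth (n := n) hA0
  have hγ0 : (0:ℝ) < γ := by exact_mod_cast hγ
  set κ : ℝ := ε / (2 * (1 + ε) * γ) with hκ
  have hκ0 : 0 < κ := by positivity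
  have hκ2 : γ * κ = ε / (2 * (1 + ε)) := by rw [hκ]; field_simp
  have hκ1 : κ < 1 := by
    rw [hκ, div_lt_one (by positivity)]
    have : (1:ℝ) ≤ γ := by exact_mod_cast hγ
    nlinarith
  have hκ3 : 1 < (1 + ε) * (1 - κ) ^ γ := by
    have b := one_add_mul_le_pow (show (-2:ℝ) ≤ -κ by linarith) γ
    have : (1 + ε) * (1 + γ * -κ) = 1 + ε / 2 := by
      rw [mul_neg, hκ2]; field_simp; ring
    have b2 := mul_le_mul_of_nonneg_left b (show 0 ≤ 1 + ε by linarith)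
    rw [this] at b2
    rw [sub_eq_add_neg]
    linarith
  refine ⟨(2 * (C0 + 1 + A / κ)) ^ γ * (2 ^ γ) ^ 2, by positivity, ?_⟩
  intro U hU hnb h hh hc hpos h0 z hz ρ hρ hρz y0 hy0 hyz
  set g := U.indicator h with hg
  have gc : Continuous g := continuous_indicator h0 hc
  set D := (C0 + 1) * ρ with hD
  have hD0 : 0 < D := by positivity
  set Ψ : En n → ℝ := fun y => g y * (D - dist y z) ^ γ with hΨ
  have hΨc : Continuous Ψ := by fun_prop
  obtain ⟨y, hyD, hymax⟩ := (isCompact_closedBall z D).exists_isMaxOn ⟨z, mem_closedBall_self hD0.le⟩ hΨc.continuousOn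
  have hy0D : y0 ∈ closedBall z D := by rw [mem_closedBall]; linarith
  have hm0 : Ψ y0 ≤ Ψ y := hymax hy0D
  have hΨ0 : h y0 * ρ ^ γ ≤ Ψ y0 := by
    simp only [hΨ, hg, indicator_of_mem hy0]
    refine mul_le_mul_of_nonneg_left ?_ (hpos y0 hy0).le
    exact pow_le_pow_left₀ hρ.le (by linarith) γ
  have hΨpos : 0 < Ψ y := lt_of_lt_of_le (mul_pos (hpos y0 hy0) (by positivity)) (hΨ0.trans hm0)
  have hy : y ∈ U := by
    by_contra hcon
    simp [hΨ, hg, indicator_of_notMem hcon] at hΨpos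
  set t := D - dist y z with ht
  have hyz' : dist y z ≤ D := hyD
  have ht0 : 0 < t := by
    rcases (sub_nonneg.2 hyz').lt_or_eq with h1 | h1
    · exact h1
    · exfalso
      simp only [hΨ] at hΨpos
      rw [← h1, zero_pow (by omega)] at hΨpos
      simp at hΨpos
  have htD : t ≤ D := by have := dist_nonneg (x := y) (y := z); linarith
  set X := 1 + A * ρ / (κ * t) with hX
  have hX1 : 1 ≤ X := by have : 0 ≤ A * ρ / (κ * t) := by positivity
                         linarith
  obtain ⟨k', hk1, hk2⟩ := exists_nat_pow_near hX1 (show (1:ℝ) < 2 by norm_num)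
  set k := k' + 1 with hk
  have hkX : (2:ℝ) ^ k ≤ 2 * X := by rw [hk, pow_succ]; linarith
  set d := (1 / 2 : ℝ) ^ k * ρ with hd
  have hd0 : 0 < d := by positivity
  have hdρ : d ≤ ρ := by
    rw [hd]; exact mul_le_of_le_one_left hρ.le (pow_le_one₀ (by norm_num) (by norm_num))
  have hAd : A * d ≤ κ * t := by
    have h1 : A * ρ / (κ * t) < 2 ^ k := by linarith
    rw [div_lt_iff₀ (by positivity)] at h1
    have h2 : (1 / 2 : ℝ) ^ k * 2 ^ k = 1 := by rw [← mul_pow]; norm_num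
    have h3 : (0:ℝ) < (1 / 2 : ℝ) ^ k := by positivity
    have h4 := mul_le_mul_of_nonneg_left h1.le h3.le
    have h5 : (1 / 2 : ℝ) ^ k * (κ * t * 2 ^ k) = κ * t := by linear_combination (κ * t) * h2
    have h6 : (1 / 2 : ℝ) ^ k * (2 ^ k * (κ * t)) = κ * t := by linear_combination (κ * t) * h2
    first
    | (rw [h5] at h4; rw [hd]; linarith)
    | (rw [h6] at h4; rw [hd]; linarith)
  have hle : h y ≤ (2 ^ γ) ^ (k + 2) * h z := by
    by_contra hcon
    push Not at hcon
    obtain ⟨p, hp, hyp, hδp, -⟩ := corkscrew hcu hU hnb hy (R := 4 * d / cu) (by positivity)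
    have e1 : cu * (4 * d / cu) / 2 = 2 * d := by field_simp; norm_num
    have e2 : 4 * d / cu / 2 = 2 / cu * d := by field_simp; norm_num
    rw [e1] at hδp
    rw [e2] at hyp
    have hcu2 : 1 ≤ 1 / cu := by rw [le_div_iff₀ hcu]; linarith
    obtain ⟨y', hy', hyy', hgr⟩ := hgrow U hU.1 h hh hc hpos h0 y hy d hd0 p (by
      rw [dist_comm]
      have : A * d / 2 = 2 / cu * d + 2 * (1 / cu) * d := by rw [hA]; ring
      rw [this]
      nlinarith) (by
      intro q hq hqU
      rw [mem_ball] at hq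
      have h1 := hchain U hU hnb h hh hpos z hz ρ hρ hρz k q hqU (by
        have := infDist_ge_of_ball hδp hq.le
        linarith) (by
        have h1 := dist_triangle4 q p y z
        rw [dist_comm p y] at h1
        have h2 : 2 / cu * d ≤ 2 / cu * ρ := by gcongr
        have : (C0 + 1 + 2 / cu + 1) * ρ = D + 2 / cu * ρ + ρ := by rw [hD]; ring
        linarith)
      have h2 : (2:ℝ) ^ γ ≥ 2 := by
        calc (2:ℝ) = 2 ^ 1 := by norm_num
          _ ≤ 2 ^ γ := pow_le_pow_right₀ (by norm_num) hγ
      have hz0 := hpos z hz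
      have h3 : 2 * ((2 ^ γ) ^ (k + 1) * h z) ≤ (2 ^ γ) ^ (k + 2) * h z := by
        rw [pow_succ _ (k + 1)]
        have : 0 < (2 ^ γ : ℝ) ^ (k + 1) * h z := by positivity
        nlinarith
      linarith)
    have hyy2 : dist y' y ≤ κ * t := hyy'.trans hAd
    have hκt : κ * t ≤ t := by nlinarith
    have htri := dist_triangle y' y z
    have ht' : (1 - κ) * t ≤ D - dist y' z := by
      linarith
    have hm : Ψ y' ≤ Ψ y := hymax (by
      rw [mem_closedBall]
      have : 0 ≤ (1 - κ) * t := mul_nonneg (by linarith) ht0.le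
      linarith)
    have hbig : ((1 + ε) * h y) * ((1 - κ) * t) ^ γ ≤ Ψ y' := by
      simp only [hΨ, hg, indicator_of_mem hy']
      refine mul_le_mul hgr ?_ ?_ (hpos y' hy').le
      · exact pow_le_pow_left₀ (mul_nonneg (by linarith) ht0.le) ht' γ
      · exact pow_nonneg (mul_nonneg (by linarith) ht0.le) γ
    have hΨy : Ψ y = h y * t ^ γ := by simp only [hΨ, hg, indicator_of_mem hy, ← ht]
    have : ((1 + ε) * h y) * ((1 - κ) * t) ^ γ = ((1 + ε) * (1 - κ) ^ γ) * Ψ y := by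
      rw [hΨy, mul_pow]; ring
    rw [this] at hbig
    nlinarith
  have hΨy : Ψ y = h y * t ^ γ := by simp only [hΨ, hg, indicator_of_mem hy, ← ht]
  have hz0 := hpos z hz
  have hfin : h y0 * ρ ^ γ ≤ ((2 * (C0 + 1 + A / κ)) ^ γ * (2 ^ γ) ^ 2 * h z) * ρ ^ γ := by
    refine (hΨ0.trans hm0).trans ?_
    rw [hΨy]
    calc h y * t ^ γ ≤ (2 ^ γ) ^ (k + 2) * h z * t ^ γ := by gcongr
      _ = (2 ^ k * t) ^ γ * (2 ^ γ) ^ 2 * h z := by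
        rw [pow_add, mul_pow, ← pow_mul, ← pow_mul, mul_comm γ k]; ring
      _ ≤ ((2 * (C0 + 1 + A / κ)) * ρ) ^ γ * (2 ^ γ) ^ 2 * h z := by
        have : 2 ^ k * t ≤ (2 * (C0 + 1 + A / κ)) * ρ := by
          have h1 : 2 ^ k * t ≤ 2 * X * t := by gcongr
          have h2 : 2 * X * t = 2 * t + 2 * (A / κ) * ρ := by rw [hX]; field_simp
          have h3 : (2 * (C0 + 1 + A / κ)) * ρ = 2 * D + 2 * (A / κ) * ρ := by rw [hD]; ring
          linarith
        gcongr
      _ = _ := by rw [mul_pow]; ring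
  exact le_of_mul_le_mul_right hfin (by positivity)


lemma lintegral_cs {α : Type*} [MeasurableSpace α] (μ : Measure α) {f g : α → ℝ≥0∞}
    (hf : AEMeasurable f μ) (hg : AEMeasurable g μ) :
    (∫⁻ a, f a * g a ∂μ) ^ 2 ≤ (∫⁻ a, f a ^ 2 ∂μ) * ∫⁻ a, g a ^ 2 ∂μ := by
  have h := ENNReal.lintegral_mul_le_Lp_mul_Lq μ Real.HolderConjugate.two_two hf hg
  simp only [Pi.mul_apply, ENNReal.rpow_two] at h
  have h2 := pow_le_pow_left₀ zero_le h 2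
  rw [mul_pow] at h2
  have e : ∀ a : ℝ≥0∞, (a ^ (1 / 2 : ℝ)) ^ 2 = a := by
    intro a
    rw [← ENNReal.rpow_two, ← ENNReal.rpow_mul]; norm_num
  rwa [e, e] at h2

lemma ftc_bound {n : ℕ} {U : Set (En n)} (hU : IsOpen U) {f : En n → ℝ} (hf : ContDiffOn ℝ 1 f U)
    {p p' : En n} (hs : ∀ t ∈ Icc (0:ℝ) 1, p + t • (p' - p) ∈ U) :
    ‖f p' - f p‖ₑ ≤ ∫⁻ t in Ioc (0:ℝ) 1, ‖fderiv ℝ f (p + t • (p' - p))‖ₑ * ‖p' - p‖ₑ := by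
  have hc : ContinuousOn (fderiv ℝ f) U := hf.continuousOn_fderiv_of_isOpen hU le_rfl
  have hline : Continuous (fun t : ℝ => p + t • (p' - p)) := by fun_prop
  have hd : ∀ t ∈ uIcc (0:ℝ) 1, HasDerivAt (fun t : ℝ => f (p + t • (p' - p)))
      (fderiv ℝ f (p + t • (p' - p)) (p' - p)) t := by
    intro t ht
    rw [uIcc_of_le zero_le_one] at ht
    have h1 : HasDerivAt (fun t : ℝ => p + t • (p' - p)) (p' - p) t := by
      have := ((hasDerivAt_id t).smul_const (p' - p)).const_add p
      simpa using this
    have h2 := ((hf.contDiffAt (hU.mem_nhds (hs t ht))).differentiableAt (by norm_num)).hasFDerivAt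
    exact h2.comp_hasDerivAt t h1
  have hcd : ContinuousOn (fun t : ℝ => fderiv ℝ f (p + t • (p' - p)) (p' - p)) (uIcc 0 1) := by
    rw [uIcc_of_le zero_le_one]
    exact (hc.comp hline.continuousOn hs).clm_apply continuousOn_const
  have := intervalIntegral.integral_eq_sub_of_hasDerivAt hd hcd.intervalIntegrable
  simp only [one_smul, add_sub_cancel, zero_smul, add_zero] at this
  rw [← this, intervalIntegral.integral_of_le zero_le_one]
  refine (enorm_integral_le_lintegral_enorm _).trans (lintegral_mono fun t => ?_)
  exact ContinuousLinearMap.le_opENorm _ _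

lemma lintegral_scale {n : ℕ} {F : En n → ℝ≥0∞} (hF : Measurable F) (c : En n) {s : ℝ} (hs : 0 < s) :
    ∫⁻ v in ball (0 : En n) 1, F (c + s • v) = ENNReal.ofReal ((s ^ n)⁻¹) * ∫⁻ z in ball c s, F z := by
  have hm : Measurable (fun z => (ball c s).indicator F (c + z)) :=
    (hF.indicator measurableSet_ball).comp (measurable_const_add c)
  have h1 : ∫⁻ v : En n, (ball c s).indicator F (c + s • v) =
      ENNReal.ofReal ((s ^ n)⁻¹) * ∫⁻ z in ball c s, F z := by
    have h2 := lintegral_map (μ := (volume : Measure (En n))) hm (measurable_const_smul s)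
    rw [Measure.map_addHaar_smul _ hs.ne', lintegral_smul_measure,
      lintegral_add_left_eq_self (μ := volume) (fun z => (ball c s).indicator F z) c,
      lintegral_indicator measurableSet_ball] at h2
    rw [← h2]
    simp [abs_of_pos hs]
  rw [← h1, ← lintegral_indicator measurableSet_ball]
  refine lintegral_congr fun v => ?_
  have : c + s • v ∈ ball c s ↔ v ∈ ball (0 : En n) 1 := by
    rw [mem_ball, dist_eq_norm, add_sub_cancel_left, norm_smul, Real.norm_of_nonneg hs.le, mem_ball,
      dist_zero_right]
    constructor
    · intro h; by_contra hc; nlinarith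
    · intro h; nlinarith
  by_cases hv : v ∈ ball (0 : En n) 1
  · rw [indicator_of_mem hv, indicator_of_mem (this.2 hv)]
  · rw [indicator_of_notMem hv, indicator_of_notMem (fun h => hv (this.1 h))]

def V1 (n : ℕ) : ℝ := (volume : Measure (En n)).real (ball 0 1)

lemma V1_pos (n : ℕ) : 0 < V1 n :=
  ENNReal.toReal_pos (measure_ball_pos _ _ one_pos).ne' measure_ball_lt_top.ne

lemma vol_ball {n : ℕ} (x : En n) {s : ℝ} (hs : 0 < s) :
    (volume : Measure (En n)) (ball x s) = ENNReal.ofReal (s ^ n * V1 n) := by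
  rw [Measure.addHaar_ball_of_pos _ _ hs, finrank_euclideanSpace, Fintype.card_fin,
    ENNReal.ofReal_mul (by positivity), V1, Measure.real, ENNReal.ofReal_toReal measure_ball_lt_top.ne]

def avg {n : ℕ} (f : En n → ℝ) (q : En n) (s : ℝ) : ℝ :=
  (V1 n)⁻¹ * ∫ v in ball (0 : En n) 1, f (q + s • v)

lemma avg_integrable {n : ℕ} {U : Set (En n)} {f : En n → ℝ} (hf : ContinuousOn f U)
    {q : En n} {s : ℝ} (hs : 0 < s) (hB : closedBall q s ⊆ U) :
    IntegrableOn (fun v => f (q + s • v)) (ball (0 : En n) 1) := by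
  have : ContinuousOn (fun v => f (q + s • v)) (closedBall (0 : En n) 1) := by
    refine hf.comp (by fun_prop) fun v hv => hB ?_
    rw [mem_closedBall, dist_zero_right] at hv
    rw [mem_closedBall, dist_eq_norm, add_sub_cancel_left, norm_smul, Real.norm_of_nonneg hs.le]
    nlinarith
  exact (this.integrableOn_compact (isCompact_closedBall _ _)).mono_set ball_subset_closedBall

lemma avg_near {n : ℕ} {U : Set (En n)} {f : En n → ℝ} (hf : ContinuousOn f U)
    {q : En n} {s c ε : ℝ} (hs : 0 < s) (hB : closedBall q s ⊆ U)
    (h : ∀ p ∈ ball q s, |f p - c| ≤ ε) : |avg f q s - c| ≤ ε := by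
  have hi := avg_integrable hf hs hB
  have hV := V1_pos n
  have e : avg f q s - c = (V1 n)⁻¹ * ∫ v in ball (0 : En n) 1, (f (q + s • v) - c) := by
    rw [integral_sub hi (integrableOn_const measure_ball_lt_top.ne), setIntegral_const, smul_eq_mul]
    unfold avg
    rw [mul_sub, ← V1]
    field_simp
  rw [e, abs_mul, abs_of_pos (inv_pos.2 hV), ← Real.norm_eq_abs (∫ v in ball (0 : En n) 1, (f (q + s • v) - c))]
  have h2 := norm_setIntegral_le_of_norm_le_const (μ := volume) (s := ball (0 : En n) 1) (C := ε)
    (f := fun v => f (q + s • v) - c) measure_ball_lt_top (by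
      intro v hv
      rw [Real.norm_eq_abs]
      apply h
      rw [mem_ball, dist_zero_right] at hv
      rw [mem_ball, dist_eq_norm, add_sub_cancel_left, norm_smul, Real.norm_of_nonneg hs.le]
      nlinarith)
  rw [← V1] at h2
  calc _ ≤ (V1 n)⁻¹ * (ε * V1 n) := by gcongr
    _ = ε := by field_simp

lemma avg_diff {n : ℕ} {U : Set (En n)} (hU : IsOpen U) {f : En n → ℝ} (hf : ContDiffOn ℝ 1 f U)
    {q q' : En n} {s s' σ : ℝ} (hσ : 0 < σ) (hB : closedBall q (4 * σ) ⊆ U) (hs : σ / 2 ≤ s) (hs1 : s ≤ σ)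
    (hs' : σ / 2 ≤ s') (hs1' : s' ≤ σ) (hq : dist q q' ≤ σ) :
    ‖avg f q' s' - avg f q s‖ₑ ^ 2 ≤
      ENNReal.ofReal (4 * 12 ^ n / V1 n * (σ ^ 2 * (σ ^ n)⁻¹)) * ∫⁻ z in ball q (3 * σ), ‖fderiv ℝ f z‖ₑ ^ 2 := by
  have hV := V1_pos n
  have hqq : ‖q' - q‖ ≤ σ := by rw [← dist_eq_norm, dist_comm]; exact hq
  have hs0 : 0 < s := by linarith
  have hs0' : 0 < s' := by linarith
  have hcl : closedBall q' s' ⊆ U := by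
    refine subset_trans (closedBall_subset_closedBall' ?_) hB
    rw [dist_comm]; linarith
  have i1 := avg_integrable hf.continuousOn hs0 (subset_trans (closedBall_subset_closedBall (by linarith)) hB)
  have i2 := avg_integrable hf.continuousOn hs0' hcl
  have hmeas : Measurable (fun z => ‖fderiv ℝ f z‖ₑ) := (measurable_fderiv ℝ f).enorm
  have hpt : ∀ (t : ℝ) (v : En n), (q + s • v) + t • ((q' + s' • v) - (q + s • v)) =
      (q + t • (q' - q)) + (s + t * (s' - s)) • v := by
    intro t v; module
  have key : ‖avg f q' s' - avg f q s‖ₑ ≤ ENNReal.ofReal ((V1 n)⁻¹ * (2 * σ) * (2 / σ) ^ n) *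
      ∫⁻ z in ball q (3 * σ), ‖fderiv ℝ f z‖ₑ := by
    have e : avg f q' s' - avg f q s =
        (V1 n)⁻¹ * ∫ v in ball (0 : En n) 1, (f (q' + s' • v) - f (q + s • v)) := by
      rw [integral_sub i2 i1]; unfold avg; ring
    rw [e, enorm_mul, Real.enorm_of_nonneg (inv_nonneg.2 hV.le)]
    calc _ ≤ ENNReal.ofReal (V1 n)⁻¹ * ∫⁻ v in ball (0 : En n) 1, ‖f (q' + s' • v) - f (q + s • v)‖ₑ := by
          gcongr; exact enorm_integral_le_lintegral_enorm _
      _ ≤ ENNReal.ofReal (V1 n)⁻¹ * ∫⁻ v in ball (0 : En n) 1, ∫⁻ t in Ioc (0:ℝ) 1,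
          ‖fderiv ℝ f ((q + t • (q' - q)) + (s + t * (s' - s)) • v)‖ₑ * ENNReal.ofReal (2 * σ) := by
          refine mul_le_mul' le_rfl ?_
          refine setLIntegral_mono' measurableSet_ball fun v hv => ?_
          rw [mem_ball, dist_zero_right] at hv
          refine (ftc_bound hU hf (p := q + s • v) (p' := q' + s' • v) ?_).trans ?_
          · intro t ht
            rw [hpt]
            apply hB
            rw [mem_closedBall, dist_eq_norm]
            have : q + t • (q' - q) + (s + t * (s' - s)) • v - q = t • (q' - q) + (s + t * (s' - s)) • v := by abel
            rw [this]
            refine (norm_add_le _ _).trans ?_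
            rw [norm_smul, norm_smul, Real.norm_of_nonneg ht.1]
            have h1 : ‖s + t * (s' - s)‖ ≤ σ := by
              rw [Real.norm_eq_abs, abs_le]
              constructor <;> nlinarith [ht.1, ht.2]
            nlinarith [ht.1, ht.2, norm_nonneg (q' - q), norm_nonneg v, norm_nonneg (s + t * (s' - s))]
          · refine lintegral_mono fun t => ?_
            simp only
            rw [hpt]
            gcongr
            rw [← ofReal_norm]
            apply ENNReal.ofReal_le_ofReal
            have : (q' + s' • v) - (q + s • v) = (q' - q) + (s' - s) • v := by module
            rw [this]
            refine (norm_add_le _ _).trans ?_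
            rw [norm_smul]
            have : ‖s' - s‖ ≤ σ := by rw [Real.norm_eq_abs, abs_le]; constructor <;> linarith
            nlinarith [norm_nonneg v, norm_nonneg (s' - s)]
      _ = ENNReal.ofReal (V1 n)⁻¹ * ∫⁻ t in Ioc (0:ℝ) 1, ∫⁻ v in ball (0 : En n) 1,
          ‖fderiv ℝ f ((q + t • (q' - q)) + (s + t * (s' - s)) • v)‖ₑ * ENNReal.ofReal (2 * σ) := by
          rw [lintegral_lintegral_swap]
          refine Measurable.aemeasurable ?_
          refine Measurable.mul_const ?_ _
          refine hmeas.comp (Continuous.measurable ?_)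
          fun_prop
      _ ≤ ENNReal.ofReal (V1 n)⁻¹ * ∫⁻ t in Ioc (0:ℝ) 1,
          ENNReal.ofReal ((2 / σ) ^ n) * (∫⁻ z in ball q (3 * σ), ‖fderiv ℝ f z‖ₑ) * ENNReal.ofReal (2 * σ) := by
          refine mul_le_mul' le_rfl ?_
          refine setLIntegral_mono' measurableSet_Ioc fun t ht => ?_
          have hst : σ / 2 ≤ s + t * (s' - s) := by nlinarith [ht.1, ht.2]
          have hst1 : s + t * (s' - s) ≤ σ := by nlinarith [ht.1, ht.2]
          rw [lintegral_mul_const, lintegral_scale hmeas _ (by linarith)]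
          · gcongr
            · rw [← inv_pow]
              refine pow_le_pow_left₀ (inv_nonneg.2 (by linarith)) ?_ n
              rw [inv_le_comm₀ (by linarith) (by positivity)]
              rw [inv_div]; exact hst
            · refine ball_subset_ball' ?_
              rw [dist_eq_norm, add_sub_cancel_left, norm_smul, Real.norm_of_nonneg ht.1.le]
              nlinarith [ht.1, ht.2, norm_nonneg (q' - q)]
          · refine hmeas.comp (Continuous.measurable ?_)
            fun_prop
      _ = _ := by
          rw [setLIntegral_const]
          simp only [Real.volume_Ioc, sub_zero, ENNReal.ofReal_one, mul_one]
          rw [ENNReal.ofReal_mul (p := (V1 n)⁻¹ * (2 * σ)) (by positivity),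
            ENNReal.ofReal_mul (p := (V1 n)⁻¹) (by positivity)]
          generalize ENNReal.ofReal (V1 n)⁻¹ = a1
          generalize ENNReal.ofReal (2 * σ) = a2
          generalize ENNReal.ofReal ((2 / σ) ^ n) = a3
          generalize (∫⁻ z in ball q (3 * σ), ‖fderiv ℝ f z‖ₑ) = a4
          ring
  have hcs := lintegral_cs (volume.restrict (ball q (3 * σ))) (f := fun _ => 1)
    (g := fun z => ‖fderiv ℝ f z‖ₑ) (by fun_prop) hmeas.aemeasurable
  simp only [one_mul, one_pow, lintegral_const, Measure.restrict_apply_univ] at hcs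
  rw [vol_ball _ (by positivity)] at hcs
  calc _ ≤ (ENNReal.ofReal ((V1 n)⁻¹ * (2 * σ) * (2 / σ) ^ n) * ∫⁻ z in ball q (3 * σ), ‖fderiv ℝ f z‖ₑ) ^ 2 := by
        gcongr
    _ ≤ ENNReal.ofReal ((V1 n)⁻¹ * (2 * σ) * (2 / σ) ^ n) ^ 2 *
        (ENNReal.ofReal ((3 * σ) ^ n * V1 n) * ∫⁻ z in ball q (3 * σ), ‖fderiv ℝ f z‖ₑ ^ 2) := by
        rw [mul_pow]; gcongr
    _ = _ := by
        rw [← mul_assoc, ← ENNReal.ofReal_pow (by positivity), ← ENNReal.ofReal_mul (by positivity)]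
        congr 2
        have e12 : (12:ℝ) ^ n = 2 ^ n * 2 ^ n * 3 ^ n := by rw [← mul_pow, ← mul_pow]; norm_num
        rw [e12]
        simp only [div_pow, mul_pow]
        field_simp
        ring


lemma sq_half (a : ℝ≥0∞) : (a ^ (1 / 2 : ℝ)) ^ 2 = a := by
  rw [← ENNReal.rpow_two, ← ENNReal.rpow_mul]; norm_num

lemma le_half {D a : ℝ≥0∞} (h : D ^ 2 ≤ a) : D ≤ a ^ (1 / 2 : ℝ) := by
  have h1 := ENNReal.rpow_le_rpow h (show (0:ℝ) ≤ 1 / 2 by norm_num)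
  rw [← ENNReal.rpow_two, ← ENNReal.rpow_mul] at h1
  norm_num at h1
  norm_num
  exact h1

lemma tsum_cs (a b : ℕ → ℝ≥0∞) : (∑' j, a j * b j) ^ 2 ≤ (∑' j, a j ^ 2) * ∑' j, b j ^ 2 := by
  have := lintegral_cs (Measure.count : Measure ℕ) (f := a) (g := b)
    (measurable_of_countable _).aemeasurable (measurable_of_countable _).aemeasurable
  simpa [lintegral_count] using this

lemma link_step {n : ℕ} {U : Set (En n)} (hU : IsOpen U) {f : En n → ℝ} (hf : ContDiffOn ℝ 1 f U)
    {σ θ : ℝ} (hσ : 0 < σ) (hθ : 1 / 2 ≤ θ) (hθ1 : θ ≤ 1) {Ω : Set (En n)} (q : ℕ → En n) (N : ℕ)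
    (hq : ∀ i, closedBall (q i) (4 * σ) ⊆ U) (hd : ∀ i, dist (q i) (q (i + 1)) ≤ σ)
    (hΩ : ∀ i, ball (q i) (3 * σ) ⊆ Ω) :
    edist (avg f (q 0) σ) (avg f (q N) (θ * σ)) ≤ (N + 1) *
      (ENNReal.ofReal (4 * 12 ^ n / V1 n * (σ ^ 2 * (σ ^ n)⁻¹)) *
        ∫⁻ z in Ω, ‖fderiv ℝ f z‖ₑ ^ 2) ^ (1 / 2 : ℝ) := by
  set W := (ENNReal.ofReal (4 * 12 ^ n / V1 n * (σ ^ 2 * (σ ^ n)⁻¹)) *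
        ∫⁻ z in Ω, ‖fderiv ℝ f z‖ₑ ^ 2) ^ (1 / 2 : ℝ) with hW
  have h1 : ∀ i, ∀ q' s', dist (q i) q' ≤ σ → σ / 2 ≤ s' → s' ≤ σ →
      edist (avg f (q i) σ) (avg f q' s') ≤ W := by
    intro i q' s' h1 h2 h3
    rw [edist_comm, edist_eq_enorm_sub]
    refine le_half ((avg_diff hU hf hσ (hq i) (by linarith) le_rfl h2 h3 h1).trans ?_)
    gcongr
    exact hΩ i
  have h2 : ∀ i : ℕ, edist (avg f (q 0) σ) (avg f (q i) σ) ≤ i * W := by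
    intro i
    induction i with
    | zero => simp
    | succ i ih =>
      refine (edist_triangle _ (avg f (q i) σ) _).trans ?_
      push_cast
      rw [add_mul, one_mul]
      exact add_le_add ih (h1 i _ _ (hd i) (by linarith) le_rfl)
  refine (edist_triangle _ (avg f (q N) σ) _).trans ?_
  rw [add_mul, one_mul]
  exact add_le_add (h2 N) (h1 N _ _ (by simpa using hσ.le) (by nlinarith) (by nlinarith))

def OmS {n : ℕ} (U : Set (En n)) (x : En n) (r κ τ : ℝ) (y : En n) : Set (En n) :=
  {z | (z ∈ U ∧ innerDist U x z < ENNReal.ofReal r) ∧ dist y z ≤ 3 * τ ∧ κ * τ ≤ infDist z (frontier U)}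

set_option maxHeartbeats 1000000 in
lemma pointwise {n : ℕ} {cu Cu : ℝ} (hcu : 0 < cu) (hcu1 : cu < 1) (hCu : 1 < Cu) :
    ∃ κ θ C : ℝ, 0 < κ ∧ 0 < θ ∧ θ < 1 ∧ 0 < C ∧ ∀ U : Set (En n), IsUniformDomain cu Cu U →
      ¬ Bornology.IsBounded U → ∀ x ∈ U, ∀ r : ℝ, 0 < r → ∀ f : En n → ℝ, ContDiffOn ℝ 1 f U →
      ∃ a : ℝ, ∀ y ∈ U, innerDist U x y < ENNReal.ofReal r →
        ‖f y - a‖ₑ ^ 2 ≤ ENNReal.ofReal (C * r) * ∑' j : ℕ,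
          ENNReal.ofReal ((r * θ ^ j) * ((r * θ ^ j) ^ n)⁻¹) *
            ∫⁻ z in OmS U x r κ (r * θ ^ j) y, ‖fderiv ℝ f z‖ₑ ^ 2 := by
  obtain ⟨N, hN⟩ := connect (n := n) (K := 8 / cu) (e := cu / 16) hcu hcu1 hCu (by positivity) (by positivity)
  have hV := V1_pos n
  set ε : ℝ := 1 / (16 * Cu) with hε
  have hε0 : 0 < ε := by positivity
  have hCε : Cu * ε = 1 / 16 := by rw [hε]; field_simp
  have hε1 : ε ≤ 1 / 16 := by nlinarith
  set κ : ℝ := cu ^ 2 * ε / 64 with hκ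
  have hκ0 : 0 < κ := by positivity
  have hκ1 : κ ≤ 1 / 1024 := by
    rw [hκ]
    have : cu ^ 2 ≤ 1 := by nlinarith
    nlinarith
  set θ : ℝ := 1 - ε with hθ
  have hθ0 : 1 / 2 ≤ θ := by rw [hθ]; linarith
  have hθ1 : θ < 1 := by rw [hθ]; linarith
  set c1 : ℝ := 4 * 12 ^ n / V1 n * (κ ^ 2 * (κ ^ n)⁻¹) with hc1
  have hc10 : 0 < c1 := by positivity
  refine ⟨κ, θ, (N + 1) ^ 2 * (1 / ε) * c1, hκ0, by linarith, hθ1, by positivity, ?_⟩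
  intro U hU hnb x hx r hr f hf
  have hcork : ∀ (w : En n) (R : ℝ), ∃ z, w ∈ U → 0 < R → (z ∈ U ∧ dist w z ≤ R / 2 ∧
      cu * R / 2 ≤ infDist z (frontier U) ∧ innerDist U w z ≤ ENNReal.ofReal (Cu * R)) := by
    intro w R
    by_cases h : w ∈ U ∧ 0 < R
    · obtain ⟨z, hz, h1⟩ := corkscrew hcu hU hnb h.1 h.2
      exact ⟨z, fun _ _ => ⟨hz, h1⟩⟩
    · exact ⟨w, fun h1 h2 => absurd ⟨h1, h2⟩ h⟩
  choose Zf hZf using hcork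
  refine ⟨avg f (Zf x (ε * r)) (κ * r), ?_⟩
  intro y hy hyr
  set τ : ℕ → ℝ := fun j => r * θ ^ j with hτ
  have hτ0 : ∀ j, 0 < τ j := fun j => by simp only [hτ]; positivity
  have hτs : ∀ j, τ (j + 1) = θ * τ j := fun j => by simp only [hτ, pow_succ]; ring
  have hτr : ∀ j, τ j ≤ r := fun j => mul_le_of_le_one_right hr.le (pow_le_one₀ (by linarith) hθ1.le)
  have hτlim : Filter.Tendsto τ Filter.atTop (nhds 0) := by
    have := (tendsto_pow_atTop_nhds_zero_of_lt_one (by linarith) hθ1).const_mul r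
    simpa [hτ] using this
  obtain ⟨J, hJ⟩ : ∃ J, innerDist U x y < ENNReal.ofReal (r - r * θ ^ J) := by
    have h1 : Filter.Tendsto (fun j => ENNReal.ofReal (r - τ j)) Filter.atTop (nhds (ENNReal.ofReal r)) := by
      refine ENNReal.tendsto_ofReal ?_
      simpa using hτlim.const_sub r
    exact (h1.eventually_const_lt hyr).exists
  obtain ⟨Y, hY0, hYJ, hY, hYd⟩ := john_seq hx hr (show 0 < θ by linarith) hθ1 J y hy (Or.inl hJ)
  have hYy : ∀ j, dist (Y j) y ≤ τ j := by
    intro j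
    rcases le_total j J with h | h
    · have := hYd j h
      have h2 := hτ0 J
      simp only [hτ] at *
      linarith
    · rw [hYJ j h, dist_self]; exact (hτ0 j).le
  set z : ℕ → En n := fun j => Zf (Y j) (ε * τ j) with hz
  have hz1 : ∀ j, z j ∈ U ∧ dist (Y j) (z j) ≤ ε * τ j / 2 ∧
      cu * (ε * τ j) / 2 ≤ infDist (z j) (frontier U) ∧ innerDist U (Y j) (z j) ≤ ENNReal.ofReal (Cu * (ε * τ j)) :=
    fun j => hZf (Y j) (ε * τ j) (hY j).1 (mul_pos hε0 (hτ0 j))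
  have hlink : ∀ j, edist (avg f (z j) (κ * τ j)) (avg f (z (j + 1)) (κ * τ (j + 1))) ≤
      (N + 1) * ((ENNReal.ofReal (τ j)) ^ (1 / 2 : ℝ) * (ENNReal.ofReal (c1 * (τ j * (τ j ^ n)⁻¹)) *
        ∫⁻ z in OmS U x r κ (τ j) y, ‖fderiv ℝ f z‖ₑ ^ 2) ^ (1 / 2 : ℝ)) := by
    intro j
    have ht := hτ0 j
    obtain ⟨zU, zd, zδ, zi⟩ := hz1 j
    obtain ⟨zU', zd', zδ', zi'⟩ := hz1 (j + 1)
    rw [hτs j] at zd' zδ' zi'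
    have hετ : 0 < ε * τ j := by positivity
    have hετ' : ε * (θ * τ j) ≤ ε * τ j := by
      have : θ * τ j ≤ τ j := by nlinarith
      gcongr
    have hετ'' : ε * τ j / 2 ≤ ε * (θ * τ j) := by
      have : τ j / 2 ≤ θ * τ j := by nlinarith
      nlinarith
    obtain ⟨q, q0, qN, hq1, hq2⟩ := hN U hU (z j) zU (z (j + 1)) zU' (cu * ε * τ j / 4) (by positivity)
      (by nlinarith) (by nlinarith) (by
        have h1 := dist_triangle4 (z j) (Y j) (Y (j + 1)) (z (j + 1))
        rw [dist_comm (z j) (Y j)] at h1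
        have h2 := (hY j).2.2
        have h3 : (1 - θ) * (r * θ ^ j) = ε * τ j := by simp only [hθ, hτ]; ring
        rw [h3] at h2
        have h4 : 8 / cu * (cu * ε * τ j / 4) = 2 * (ε * τ j) := by field_simp; norm_num
        rw [h4]
        linarith)
    have es : cu / 16 * (cu * ε * τ j / 4) = κ * τ j := by rw [hκ]; ring
    have es2 : cu * (cu * ε * τ j / 4) / 2 = 8 * (κ * τ j) := by rw [hκ]; ring
    have es3 : Cu * (8 / cu * (cu * ε * τ j / 4)) = τ j / 8 := by
      have : Cu * (8 / cu * (cu * ε * τ j / 4)) = 2 * (Cu * ε) * τ j := by field_simp; norm_num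
      rw [this, hCε]; ring
    have es4 : Cu * (ε * τ j) = τ j / 16 := by rw [← mul_assoc, hCε]; ring
    rw [es4] at zi
    simp only [es, es2, es3] at hq1 hq2
    have hσ : 0 < κ * τ j := by positivity
    have hσ1 : κ * τ j ≤ 1 / 1024 * τ j := by gcongr
    have hqball : ∀ i, ball (q i) (8 * (κ * τ j)) ⊆ U := fun i =>
      (ball_subset_ball (hq2 i).2.1).trans (ball_infDist_subset hU.1 (hq2 i).1)
    have hqz : ∀ i, dist (z j) (q i) ≤ τ j / 8 := by
      intro i
      have h1 := (edist_le_innerDist (U := U) (x := z j) (y := q i)).trans (hq2 i).2.2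
      rw [edist_dist] at h1
      exact (ENNReal.ofReal_le_ofReal_iff (by positivity)).1 h1
    have hΩ : ∀ i, ball (q i) (3 * (κ * τ j)) ⊆ OmS U x r κ (τ j) y := by
      intro i p hp
      have hpU : p ∈ U := hqball i (ball_subset_ball (by linarith) hp)
      have hp' := hp
      rw [mem_ball] at hp
      refine ⟨⟨hpU, ?_⟩, ?_, ?_⟩
      · have h1 : innerDist U (q i) p ≤ ENNReal.ofReal (3 * (κ * τ j)) := by
          refine (innerDist_segment ?_).trans ?_
          · refine subset_trans ?_ (hqball i)
            exact (convex_ball _ _).segment_subset (mem_ball_self (by positivity))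
              (ball_subset_ball (by linarith) hp')
          · rw [edist_dist, dist_comm]
            exact ENNReal.ofReal_le_ofReal hp.le
        have h2 := innerDist_triangle (U := U) x (Y j) (z j)
        have h3 := innerDist_triangle (U := U) x (z j) (q i)
        have h4 := innerDist_triangle (U := U) x (q i) p
        have hrt : 0 ≤ r - τ j := by linarith [hτr j]
        calc innerDist U x p ≤ ENNReal.ofReal (r - τ j) + ENNReal.ofReal (τ j / 16) +
              ENNReal.ofReal (τ j / 8) + ENNReal.ofReal (3 * (κ * τ j)) := by
              refine h4.trans (add_le_add (h3.trans (add_le_add (h2.trans (add_le_add (hY j).2.1 zi)) (hq2 i).2.2)) h1)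
          _ = ENNReal.ofReal (r - τ j + τ j / 16 + τ j / 8 + 3 * (κ * τ j)) := by
              rw [ENNReal.ofReal_add (by positivity) (by positivity),
                ENNReal.ofReal_add (by positivity) (by positivity),
                ENNReal.ofReal_add hrt (by positivity)]
          _ < ENNReal.ofReal r := by
              rw [ENNReal.ofReal_lt_ofReal_iff hr]
              linarith
      · have h1 := dist_triangle4 y (Y j) (z j) (q i)
        have h2 := dist_triangle y (q i) p
        have h3 := hYy j
        have h4 := hqz i
        rw [dist_comm] at hp h3
        nlinarith
      · have := infDist_ge_of_ball (hq2 i).2.1 hp.le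
        linarith
    have hfin := link_step hU.1 hf hσ hθ0 hθ1.le (Ω := OmS U x r κ (τ j) y) q N
      (fun i => (closedBall_subset_ball (by linarith)).trans (hqball i)) hq1 hΩ
    rw [q0, qN] at hfin
    have e3 : θ * (κ * τ j) = κ * τ (j + 1) := by rw [hτs]; ring
    rw [e3] at hfin
    refine hfin.trans (le_of_eq ?_)
    rw [← ENNReal.mul_rpow_of_nonneg _ _ (by norm_num), ← mul_assoc (ENNReal.ofReal (τ j)),
      ← ENNReal.ofReal_mul ht.le]
    congr 4
    rw [hc1, mul_pow κ (τ j) 2, mul_pow κ (τ j) n, mul_inv]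
    ring
  have hlim : Filter.Tendsto (fun j => avg f (z j) (κ * τ j)) Filter.atTop (nhds (f y)) := by
    rw [Metric.tendsto_atTop]
    intro e he
    have hfc : ContinuousAt f y := (hf.continuousOn).continuousAt (hU.1.mem_nhds hy)
    obtain ⟨d, hd, hfd⟩ := Metric.continuousAt_iff.1 hfc (e / 2) (by positivity)
    obtain ⟨j0, hj0⟩ := (hτlim.eventually_lt_const (show 0 < d / 4 by positivity)).exists_forall_of_atTop
    refine ⟨j0, fun j hj => ?_⟩
    have hjd := hj0 j hj
    have ht := hτ0 j
    obtain ⟨zU, zd, zδ, zi⟩ := hz1 j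
    have hκc : κ * τ j < cu * (ε * τ j) / 2 := by
      have : κ < cu * ε / 2 := by
        rw [hκ]
        have : 0 < cu * ε := by positivity
        nlinarith
      nlinarith
    have := avg_near (U := U) (f := f) hf.continuousOn (q := z j) (s := κ * τ j) (c := f y) (ε := e / 2)
      (by positivity) ?_ ?_
    · rw [Real.dist_eq]; linarith
    · exact (closedBall_subset_ball (hκc.trans_le zδ)).trans (ball_infDist_subset hU.1 zU)
    · intro p hp
      rw [← Real.dist_eq]
      refine (hfd ?_).le
      rw [mem_ball] at hp
      have h1 := dist_triangle4 p (z j) (Y j) y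
      have h2 := hYy j
      rw [dist_comm (z j)] at h1
      nlinarith
  have h0 : edist (avg f (z 0) (κ * τ 0)) (f y) ≤ _ :=
    edist_le_tsum_of_edist_le_of_tendsto₀ _ hlink hlim
  have ez : avg f (z 0) (κ * τ 0) = avg f (Zf x (ε * r)) (κ * r) := by
    simp [hz, hτ, hY0]
  rw [ez, edist_comm, edist_eq_enorm_sub, ENNReal.tsum_mul_left] at h0
  have h1 := pow_le_pow_left₀ zero_le h0 2
  refine h1.trans ?_
  rw [mul_pow]
  refine (mul_le_mul' le_rfl (tsum_cs _ _)).trans ?_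
  simp only [sq_half]
  have hsum : ∑' j, ENNReal.ofReal (τ j) = ENNReal.ofReal (r * (1 / ε)) := by
    rw [← ENNReal.ofReal_tsum_of_nonneg (fun j => (hτ0 j).le)]
    · congr 1
      simp only [hτ]
      rw [tsum_mul_left, tsum_geometric_of_lt_one (by linarith) hθ1, hθ]
      simp
    · exact (summable_geometric_of_lt_one (by linarith) hθ1).mul_left r
  rw [hsum]
  have hsum2 : ∑' j, ENNReal.ofReal (c1 * (τ j * (τ j ^ n)⁻¹)) *
        ∫⁻ z in OmS U x r κ (τ j) y, ‖fderiv ℝ f z‖ₑ ^ 2 = ENNReal.ofReal c1 *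
        ∑' j, ENNReal.ofReal (τ j * (τ j ^ n)⁻¹) *
        ∫⁻ z in OmS U x r κ (τ j) y, ‖fderiv ℝ f z‖ₑ ^ 2 := by
    rw [← ENNReal.tsum_mul_left]
    refine tsum_congr fun j => ?_
    rw [ENNReal.ofReal_mul hc10.le, mul_assoc]
  rw [hsum2]
  have eN : ((N : ℝ≥0∞) + 1) ^ 2 = ENNReal.ofReal (((N : ℝ) + 1) ^ 2) := by
    rw [ENNReal.ofReal_pow (by positivity), ENNReal.ofReal_add (by positivity) (by positivity)]
    simp
  rw [eN, ← mul_assoc (ENNReal.ofReal (r * (1 / ε))), ← mul_assoc, ← ENNReal.ofReal_mul (by positivity),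
    ← ENNReal.ofReal_mul (by positivity)]
  refine le_of_eq ?_
  congr 2
  ring


theorem iball_open {n : ℕ} {U : Set (En n)} (hU : IsOpen U) (x : En n) (r : ℝ) :
    IsOpen {y | y ∈ U ∧ innerDist U x y < ENNReal.ofReal r} := by
  rw [Metric.isOpen_iff]
  rintro y ⟨hy, hyr⟩
  obtain ⟨e, he, hb⟩ := Metric.isOpen_iff.1 hU y hy
  obtain ⟨s, hs, hsr⟩ := ENNReal.lt_iff_exists_add_pos_lt.1 hyr
  refine ⟨min e s, lt_min he (by exact_mod_cast hs), fun p hp => ?_⟩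
  have hp1 : p ∈ ball y e := ball_subset_ball (min_le_left _ _) hp
  have hp2 : p ∈ ball y s := ball_subset_ball (min_le_right _ _) hp
  refine ⟨hb hp1, (innerDist_triangle (U := U) x y p).trans_lt (lt_of_le_of_lt ?_ hsr)⟩
  refine add_le_add le_rfl ((innerDist_segment ?_).trans ?_)
  · exact ((convex_ball _ _).segment_subset (mem_ball_self he) hp1).trans hb
  · rw [edist_comm, edist_dist]
    have := (mem_ball.1 hp2).le
    rw [← ENNReal.ofReal_coe_nnreal]
    exact ENNReal.ofReal_le_ofReal this

theorem tonelli_step {n : ℕ} {B : Set (En n)} (hB : MeasurableSet B) {τ s : ℝ} (hτ : 0 < τ)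
    {K : ℝ≥0∞} {w g : En n → ℝ≥0∞} (hw : Measurable w) (hg : Measurable g)
    {D : En n → ℝ} (hD : Continuous D)
    (H : ∀ z ∈ B, s ≤ D z → ∀ y ∈ B, dist y z ≤ 3 * τ → w y ≤ K * w z) :
    Measurable (fun y => w y * ∫⁻ z in {z | z ∈ B ∧ dist y z ≤ 3 * τ ∧ s ≤ D z}, g z) ∧
    ∫⁻ y in B, w y * ∫⁻ z in {z | z ∈ B ∧ dist y z ≤ 3 * τ ∧ s ≤ D z}, g z ≤
      K * ENNReal.ofReal ((4 * τ) ^ n * V1 n) * ∫⁻ z in B, g z * w z := by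
  set S : Set (En n × En n) := {p | dist p.1 p.2 ≤ 3 * τ ∧ s ≤ D p.2} with hS
  have hSm : MeasurableSet S := by
    have h1 : IsClosed {p : En n × En n | dist p.1 p.2 ≤ 3 * τ} :=
      isClosed_le (by fun_prop) (by fun_prop)
    have h2 : IsClosed {p : En n × En n | s ≤ D p.2} :=
      isClosed_le (by fun_prop) (by fun_prop)
    exact (h1.inter h2).measurableSet
  set F : En n → En n → ℝ≥0∞ := fun y z => S.indicator (fun p => w p.1 * g p.2) (y, z) with hF
  have hFm : Measurable (Function.uncurry F) := by
    have : Function.uncurry F = S.indicator (fun p => w p.1 * g p.2) := by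
      ext ⟨a, b⟩; rfl
    rw [this]
    exact Measurable.indicator (by fun_prop) hSm
  have h1 : ∀ y, w y * ∫⁻ z in {z | z ∈ B ∧ dist y z ≤ 3 * τ ∧ s ≤ D z}, g z =
      ∫⁻ z in B, F y z := by
    intro y
    have hT : MeasurableSet {z | dist y z ≤ 3 * τ ∧ s ≤ D z} := by
      have h1 : IsClosed {z : En n | dist y z ≤ 3 * τ} :=
        isClosed_le (by fun_prop) (by fun_prop)
      have h2 : IsClosed {z : En n | s ≤ D z} :=
        isClosed_le (by fun_prop) (by fun_prop)
      exact (h1.inter h2).measurableSet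
    have e1 : {z | z ∈ B ∧ dist y z ≤ 3 * τ ∧ s ≤ D z} =
      {z | dist y z ≤ 3 * τ ∧ s ≤ D z} ∩ B := by
      ext z; simp only [mem_inter_iff, mem_ofPred_eq]; tauto
    rw [e1, ← setLIntegral_indicator hT, ← lintegral_const_mul _ (hg.indicator hT)]
    refine lintegral_congr fun z => ?_
    simp only [hF, indicator]
    by_cases hz : dist y z ≤ 3 * τ ∧ s ≤ D z
    · rw [if_pos (show z ∈ {z | dist y z ≤ 3 * τ ∧ s ≤ D z} from hz),
        if_pos (show (y, z) ∈ S from hz)]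
    · rw [if_neg (show z ∉ {z | dist y z ≤ 3 * τ ∧ s ≤ D z} from hz), if_neg (show (y, z) ∉ S from hz), mul_zero]
  simp only [h1]
  refine ⟨hFm.lintegral_prod_right, ?_⟩
  rw [lintegral_lintegral_swap hFm.aemeasurable, ← lintegral_const_mul _ (by fun_prop)]
  refine setLIntegral_mono' hB fun z hz => ?_
  calc ∫⁻ y in B, F y z
      ≤ ∫⁻ y in B, (ball z (4 * τ)).indicator (fun _ => K * w z * g z) y := by
        refine setLIntegral_mono' hB fun y hy => ?_
        simp only [hF, indicator]
        by_cases hz' : dist y z ≤ 3 * τ ∧ s ≤ D z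
        · rw [if_pos (show (y, z) ∈ S from hz'), if_pos (mem_ball.2 (by linarith [hz'.1]))]
          exact mul_le_mul' (H z hz hz'.2 y hy hz'.1) le_rfl
        · rw [if_neg (show (y, z) ∉ S from hz')]
          exact zero_le
    _ ≤ ∫⁻ y, (ball z (4 * τ)).indicator (fun _ => K * w z * g z) y :=
        setLIntegral_le_lintegral _ _
    _ = K * w z * g z * volume (ball z (4 * τ)) := by
        rw [lintegral_indicator measurableSet_ball, setLIntegral_const]
    _ = _ := by
        rw [vol_ball z (by positivity)]
        ring

theorem core {n : ℕ} {cu Cu : ℝ} (hcu : 0 < cu) (hcu1 : cu < 1) (hCu : 1 < Cu) :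
    ∃ P : ℝ, 0 < P ∧ ∀ U : Set (En n), IsUniformDomain cu Cu U → ¬ Bornology.IsBounded U →
      ∀ h : En n → ℝ, IsHarmonicOn h U → ContinuousOn h (closure U) → (∀ z ∈ U, 0 < h z) →
      (∀ z ∈ frontier U, h z = 0) → ∀ x ∈ U, ∀ r : ℝ, 0 < r → ∀ f : En n → ℝ,
      ContDiffOn ℝ 1 f U → ∃ a : ℝ,
        ∫⁻ y in {y | y ∈ U ∧ innerDist U x y < ENNReal.ofReal r}, ‖f y - a‖ₑ ^ 2 * ‖h y‖ₑ ^ 2 ≤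
        ENNReal.ofReal (P * r ^ 2) *
          ∫⁻ y in {y | y ∈ U ∧ innerDist U x y < ENNReal.ofReal r},
            ‖fderiv ℝ f y‖ₑ ^ 2 * ‖h y‖ₑ ^ 2 := by
  obtain ⟨κ, θ, C, hκ, hθ0, hθ1, hC, hpt⟩ := pointwise (n := n) hcu hcu1 hCu
  obtain ⟨C1, hC1, hcar⟩ := carleson (n := n) (C0 := 3 / κ) hcu hcu1 hCu (by positivity)
  have hV := V1_pos n
  have hθ' : 0 < 1 - θ := by linarith
  refine ⟨C * C1 ^ 2 * 4 ^ n * V1 n / (1 - θ), by positivity, ?_⟩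
  intro U hU hUb h hh hhc hpos h0 x hx r hr f hf
  obtain ⟨a, ha⟩ := hpt U hU hUb x hx r hr f hf
  refine ⟨a, ?_⟩
  set B : Set (En n) := {y | y ∈ U ∧ innerDist U x y < ENNReal.ofReal r} with hBdef
  have hBm : MeasurableSet B := (iball_open hU.1 x r).measurableSet
  have hBU : B ⊆ U := fun y hy => hy.1
  set w : En n → ℝ≥0∞ := fun y => ‖U.indicator h y‖ₑ ^ 2 with hw
  set g : En n → ℝ≥0∞ := fun y => ‖fderiv ℝ f y‖ₑ ^ 2 with hg
  have hind : Continuous (U.indicator h) := continuous_indicator h0 hhc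
  have hwm : Measurable w := by
    have := hind.measurable
    fun_prop
  have hgm : Measurable g := by
    have := measurable_fderiv ℝ f
    fun_prop
  have hwB : ∀ y ∈ B, ‖h y‖ₑ ^ 2 = w y := fun y hy => by
    simp only [hw]; rw [indicator_of_mem (hBU hy)]
  set τ : ℕ → ℝ := fun j => r * θ ^ j with hτ
  have hτ0 : ∀ j, 0 < τ j := fun j => by positivity
  have hstep : ∀ j, Measurable (fun y => w y * ∫⁻ z in OmS U x r κ (τ j) y, g z) ∧
      ∫⁻ y in B, w y * ∫⁻ z in OmS U x r κ (τ j) y, g z ≤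
      ENNReal.ofReal (C1 ^ 2) * ENNReal.ofReal ((4 * τ j) ^ n * V1 n) *
        ∫⁻ z in B, g z * w z := by
    intro j
    refine tonelli_step (s := κ * τ j) hBm (hτ0 j) hwm hgm
      (continuous_infDist_pt (frontier U)) ?_
    intro z hz hs y hy hyz
    have h1 := hcar U hU hUb h hh hhc hpos h0 z (hBU hz) (κ * τ j)
      (mul_pos hκ (hτ0 j)) hs y (hBU hy) (by
        rw [← mul_assoc, div_mul_cancel₀ _ hκ.ne']; exact hyz)
    rw [← hwB y hy, ← hwB z hz, ← ofReal_norm, ← ofReal_norm,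
      ENNReal.ofReal_pow hC1.le, ← mul_pow, ← ENNReal.ofReal_mul hC1.le]
    refine pow_le_pow_left' (ENNReal.ofReal_le_ofReal ?_) 2
    rw [Real.norm_of_nonneg (hpos y (hBU hy)).le, Real.norm_of_nonneg (hpos z (hBU hz)).le]
    exact h1
  set I : ℝ≥0∞ := ∫⁻ z in B, g z * w z with hI
  have hIeq : ∫⁻ y in B, ‖fderiv ℝ f y‖ₑ ^ 2 * ‖h y‖ₑ ^ 2 = I :=
    setLIntegral_congr_fun hBm fun y hy => by simp only [hwB y hy, hg]
  rw [hIeq]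
  have hMr : ∀ j, ENNReal.ofReal (τ j * (τ j ^ n)⁻¹) * (ENNReal.ofReal (C1 ^ 2) *
      ENNReal.ofReal ((4 * τ j) ^ n * V1 n)) =
      ENNReal.ofReal (C1 ^ 2 * 4 ^ n * V1 n * r * θ ^ j) := by
    intro j
    have ht := hτ0 j
    rw [← ENNReal.ofReal_mul (by positivity), ← ENNReal.ofReal_mul (by positivity)]
    congr 1
    have e : (τ j ^ n)⁻¹ * τ j ^ n = 1 := inv_mul_cancel₀ (by positivity)
    rw [mul_pow 4 (τ j) n]
    calc τ j * (τ j ^ n)⁻¹ * (C1 ^ 2 * (4 ^ n * τ j ^ n * V1 n))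
        = ((τ j ^ n)⁻¹ * τ j ^ n) * (C1 ^ 2 * 4 ^ n * V1 n * τ j) := by ring
      _ = _ := by rw [e, one_mul, hτ]; ring
  have hsum : ∑' j, ENNReal.ofReal (C1 ^ 2 * 4 ^ n * V1 n * r * θ ^ j) =
      ENNReal.ofReal (C1 ^ 2 * 4 ^ n * V1 n * r * (1 - θ)⁻¹) := by
    rw [← ENNReal.ofReal_tsum_of_nonneg (fun j => by positivity)
      ((summable_geometric_of_lt_one hθ0.le hθ1).mul_left _), tsum_mul_left,
      tsum_geometric_of_lt_one hθ0.le hθ1]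
  calc ∫⁻ y in B, ‖f y - a‖ₑ ^ 2 * ‖h y‖ₑ ^ 2
      ≤ ∫⁻ y in B, ENNReal.ofReal (C * r) * ∑' j, ENNReal.ofReal (τ j * (τ j ^ n)⁻¹) *
          (w y * ∫⁻ z in OmS U x r κ (τ j) y, g z) := by
        refine setLIntegral_mono' hBm fun y hy => ?_
        rw [hwB y hy]
        refine (mul_le_mul' (ha y hy.1 hy.2) le_rfl).trans (le_of_eq ?_)
        rw [mul_assoc, ← ENNReal.tsum_mul_right]
        congr 1
        refine tsum_congr fun j => ?_
        rw [mul_comm (w y), mul_assoc]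
    _ = ENNReal.ofReal (C * r) * ∑' j, ENNReal.ofReal (τ j * (τ j ^ n)⁻¹) *
          ∫⁻ y in B, (w y * ∫⁻ z in OmS U x r κ (τ j) y, g z) := by
        rw [lintegral_const_mul' _ _ ENNReal.ofReal_ne_top,
          lintegral_tsum (fun j => ((hstep j).1.const_mul _).aemeasurable)]
        congr 1
        refine tsum_congr fun j => ?_
        rw [lintegral_const_mul' _ _ ENNReal.ofReal_ne_top]
    _ ≤ ENNReal.ofReal (C * r) * ∑' j, ENNReal.ofReal (C1 ^ 2 * 4 ^ n * V1 n * r * θ ^ j) * I := by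
        refine mul_le_mul' le_rfl (ENNReal.tsum_le_tsum fun j => ?_)
        refine (mul_le_mul' le_rfl (hstep j).2).trans (le_of_eq ?_)
        rw [← mul_assoc, hMr]
    _ = _ := by
        rw [ENNReal.tsum_mul_right, hsum, ← mul_assoc, ← ENNReal.ofReal_mul (by positivity)]
        congr 2
        field_simp

/-- Weighted Poincaré inequality, with weight `h²` for a harmonic profile `h`,
on inner balls of an unbounded uniform domain in `ℝⁿ`. -/
theorem statement5 (n : ℕ) (hn : 1 ≤ n) (cu Cu : ℝ)
    (hcu : cu ∈ Set.Ioo (0:ℝ) 1) (hCu : 1 < Cu) :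
    ∃ P : ℝ, 0 < P ∧
      ∀ U : Set (En n), U ≠ Set.univ → (frontier U).Nonempty →
        ¬ Bornology.IsBounded U → IsUniformDomain cu Cu U →
        ∀ h : En n → ℝ, ContinuousOn h (closure U) → (∀ z ∈ U, 0 < h z) →
          IsHarmonicOn h U → (∀ z ∈ frontier U, h z = 0) →
          ∀ x ∈ U, ∀ r : ℝ, 0 < r →
            ∀ f : En n → ℝ, ContDiffOn ℝ 1 f U →
              ∀ B : Set (En n), B = {y | y ∈ U ∧ innerDist U x y < ENNReal.ofReal r} →
                MeasureTheory.IntegrableOn (fun y => ‖fderiv ℝ f y‖^2 * (h y)^2) B →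
                ∀ fB : ℝ, fB = (∫ z in B, f z * (h z)^2) / (∫ z in B, (h z)^2) →
                  ∫ y in B, (f y - fB)^2 * (h y)^2 ≤
                    P * r^2 * ∫ y in B, ‖fderiv ℝ f y‖^2 * (h y)^2 := by
  obtain ⟨P, hP, hcore⟩ := core (n := n) hcu.1 hcu.2 hCu
  refine ⟨P, hP, ?_⟩
  intro U _ _ hUb hU h hhc hpos hh h0 x hx r hr f hf B hBdef hgradint fB hfB
  obtain ⟨a, ha⟩ := hcore U hU hUb h hh hhc hpos h0 x hx r hr f hf
  rw [← hBdef] at ha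
  have hBo : IsOpen B := by rw [hBdef]; exact iball_open hU.1 x r
  have hBm := hBo.measurableSet
  have hBU : B ⊆ U := by rw [hBdef]; exact fun y hy => hy.1
  have hxB : x ∈ B := by
    rw [hBdef]
    refine ⟨hx, ?_⟩
    rw [innerDist_self hx]
    exact ENNReal.ofReal_pos.2 hr
  have hBb : B ⊆ closedBall x r := by
    rw [hBdef]
    rintro y ⟨_, hy⟩
    have h1 := (edist_le_innerDist (U := U) (x := x) (y := y)).trans hy.le
    rw [edist_dist, ENNReal.ofReal_le_ofReal_iff hr.le, dist_comm] at h1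
    exact h1
  have hind : Continuous (U.indicator h) := continuous_indicator h0 hhc
  have hwint : IntegrableOn (fun y => (h y) ^ 2) B := by
    have h1 : IntegrableOn (fun y => (U.indicator h y) ^ 2) (closedBall x r) :=
      (hind.pow 2).continuousOn.integrableOn_compact (isCompact_closedBall x r)
    refine (h1.mono_set hBb).congr_fun (fun y hy => ?_) hBm
    simp only [indicator_of_mem (hBU hy)]
  have hhm : AEStronglyMeasurable h (volume.restrict B) :=
    (hhc.mono (hBU.trans subset_closure)).aestronglyMeasurable hBm
  have hfm : AEStronglyMeasurable f (volume.restrict B) :=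
    (hf.continuousOn.mono hBU).aestronglyMeasurable hBm
  have hconv : ∀ (s t : ℝ), ENNReal.ofReal (s ^ 2 * t ^ 2) = ‖s‖ₑ ^ 2 * ‖t‖ₑ ^ 2 := by
    intro s t
    rw [ENNReal.ofReal_mul (sq_nonneg s), ← ofReal_norm, ← ofReal_norm,
      ← ENNReal.ofReal_pow (norm_nonneg _), ← ENNReal.ofReal_pow (norm_nonneg _),
      Real.norm_eq_abs, Real.norm_eq_abs, sq_abs, sq_abs]
  have hG : ∫⁻ y in B, ‖fderiv ℝ f y‖ₑ ^ 2 * ‖h y‖ₑ ^ 2 =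
      ENNReal.ofReal (∫ y in B, ‖fderiv ℝ f y‖ ^ 2 * (h y) ^ 2) := by
    rw [ofReal_integral_eq_lintegral_ofReal hgradint (Filter.Eventually.of_forall fun y => by positivity)]
    refine lintegral_congr fun y => ?_
    rw [hconv, enorm_norm]
  have hGnn : 0 ≤ ∫ y in B, ‖fderiv ℝ f y‖ ^ 2 * (h y) ^ 2 :=
    integral_nonneg fun y => by positivity
  rw [hG, ← ENNReal.ofReal_mul (by positivity)] at ha
  have hm2 : AEStronglyMeasurable (fun y => (f y - a) ^ 2 * (h y) ^ 2) (volume.restrict B) :=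
    ((hfm.sub aestronglyMeasurable_const).pow 2).mul (hhm.pow 2)
  have hA : IntegrableOn (fun y => (f y - a) ^ 2 * (h y) ^ 2) B := by
    refine ⟨hm2, ?_⟩
    rw [hasFiniteIntegral_iff_ofReal (Filter.Eventually.of_forall fun y => by positivity)]
    simp only [hconv]
    exact ha.trans_lt ENNReal.ofReal_lt_top
  have hA1 : IntegrableOn (fun y => (f y - a) * (h y) ^ 2) B := by
    refine (hA.add hwint).mono' ((hfm.sub aestronglyMeasurable_const).mul (hhm.pow 2))
      (Filter.Eventually.of_forall fun y => ?_)
    simp only [Pi.add_apply]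
    rw [norm_mul, Real.norm_eq_abs, Real.norm_of_nonneg (sq_nonneg _)]
    have : |f y - a| ≤ (f y - a) ^ 2 + 1 := by
      rw [← sq_abs]; nlinarith [sq_nonneg (|f y - a| - 1), abs_nonneg (f y - a)]
    nlinarith [sq_nonneg (h y)]
  have hle : ∫ y in B, (f y - a) ^ 2 * (h y) ^ 2 ≤
      P * r ^ 2 * ∫ y in B, ‖fderiv ℝ f y‖ ^ 2 * (h y) ^ 2 := by
    rw [← ENNReal.ofReal_le_ofReal_iff (by positivity),
      ofReal_integral_eq_lintegral_ofReal hA (Filter.Eventually.of_forall fun y => by positivity)]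
    simp only [hconv]
    exact ha
  refine le_trans ?_ hle
  set W : ℝ := ∫ z in B, (h z) ^ 2 with hW
  have hWpos : 0 < W := by
    rw [hW, setIntegral_pos_iff_support_of_nonneg_ae
      (Filter.Eventually.of_forall fun y => by positivity) hwint]
    have : B ⊆ Function.support (fun z => h z ^ 2) ∩ B := fun y hy =>
      ⟨(pow_pos (hpos y (hBU hy)) 2).ne', hy⟩
    exact (hBo.measure_pos volume ⟨x, hxB⟩).trans_le (measure_mono this)
  set M : ℝ := ∫ z in B, (f z - a) * (h z) ^ 2 with hM
  have hfint : ∫ z in B, f z * (h z) ^ 2 = M + a * W := by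
    rw [hM, hW, ← integral_const_mul, ← integral_add hA1 (hwint.const_mul a)]
    refine integral_congr_ae (Filter.Eventually.of_forall fun y => ?_)
    simp only
    ring
  have hMeq : M = (fB - a) * W := by
    rw [hfB, hfint]
    field_simp
    ring
  have hexp : ∫ y in B, (f y - fB) ^ 2 * (h y) ^ 2 =
      (∫ y in B, (f y - a) ^ 2 * (h y) ^ 2) - 2 * (fB - a) * M + (fB - a) ^ 2 * W := by
    have hD : Integrable (fun y => (f y - a) ^ 2 * (h y) ^ 2 -
        2 * (fB - a) * ((f y - a) * (h y) ^ 2)) (volume.restrict B) :=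
      hA.sub (hA1.const_mul _)
    rw [hM, hW, ← integral_const_mul, ← integral_const_mul,
      ← integral_sub hA (hA1.const_mul _),
      ← integral_add hD (hwint.const_mul _)]
    refine integral_congr_ae (Filter.Eventually.of_forall fun y => ?_)
    simp only
    ring
  rw [hexp, hMeq]
  nlinarith [mul_nonneg (sq_nonneg (fB - a)) hWpos.le]
end
end

section
/- Let n ≥ 1, x₀ ∈ ℝⁿ, 0 < a < A, R > 0, and let Ω ⊆ ℝⁿ be an open convex set with B(x₀, aR) ⊆ Ω ⊆ B(x₀, AR). Then there exist c ∈ (0,1) and C ∈ (1,∞), depending only on a and A (in particular, not on n, R, or Ω), such that Ω is a (c,C)-uniform domain. -/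
open Set Metric MeasureTheory ENNReal

noncomputable section

lemma curve_lip {n : ℕ} (x y x₀ : En n) (s M : ℝ) (hs : 0 ≤ s) (hs1 : s ≤ 1)
    (hM : ∀ t ∈ Icc (0:ℝ) 1, ‖x₀ - (x + t • (y - x))‖ ≤ M)
    (γ : ℝ → En n)
    (hγ : ∀ t, γ t = (x + t • (y - x)) + (s * (t * (1 - t))) • (x₀ - (x + t • (y - x))))
    (t u : ℝ) (ht : t ∈ Icc (0:ℝ) 1) (hu : u ∈ Icc (0:ℝ) 1) :
    dist (γ t) (γ u) ≤ (‖y - x‖ + s * M) * |t - u| := by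
  have e : γ t - γ u = ((1 - s * (t * (1 - t))) * (t - u)) • (y - x)
      + (s * ((t - u) * (1 - t - u))) • (x₀ - (x + u • (y - x))) := by
    rw [hγ, hγ]; module
  rw [dist_eq_norm, e]
  refine (norm_add_le _ _).trans ?_
  rw [norm_smul, norm_smul, Real.norm_eq_abs, Real.norm_eq_abs, abs_mul, abs_mul, abs_mul,
    abs_of_nonneg hs]
  obtain ⟨h0, h1⟩ := ht
  obtain ⟨k0, k1⟩ := hu
  have q0 : 0 ≤ t * (1 - t) := mul_nonneg h0 (by linarith)
  have q1 : t * (1 - t) ≤ 1 := by nlinarith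
  have a1 : |1 - s * (t * (1 - t))| ≤ 1 := by
    have := mul_nonneg hs q0
    have := mul_le_one₀ hs1 q0 q1
    rw [abs_le]; constructor <;> linarith
  have a2 : |1 - t - u| ≤ 1 := by rw [abs_le]; constructor <;> linarith
  have a3 := hM u ⟨k0, k1⟩
  calc _ ≤ 1 * |t - u| * ‖y - x‖ + s * (|t - u| * 1) * M := by gcongr
    _ = _ := by ring

/-- Any open convex set sandwiched between balls `B(x₀,aR) ⊆ Ω ⊆ B(x₀,AR)` is a
`(c,C)`-uniform domain with constants depending only on `a` and `A`. -/
theorem statement10 (a A : ℝ) (ha : 0 < a) (haA : a < A) :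
    ∃ c ∈ Set.Ioo (0:ℝ) 1, ∃ C : ℝ, 1 < C ∧
      ∀ n : ℕ, 1 ≤ n → ∀ (x₀ : En n) (R : ℝ), 0 < R →
        ∀ Ω : Set (En n), IsOpen Ω → Convex ℝ Ω →
          Metric.ball x₀ (a * R) ⊆ Ω → Ω ⊆ Metric.ball x₀ (A * R) →
          IsUniformDomain c C Ω := by
  have hA : 0 < A := ha.trans haA
  refine ⟨a / (6 * A), ⟨by positivity, by rw [div_lt_one (by positivity)]; linarith⟩, 2,
    by norm_num, ?_⟩
  intro n hn x₀ R hR Ω hO hC hin hout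
  have hx₀ : x₀ ∈ Ω := hin (mem_ball_self (by positivity))
  have hne : Ω.Nonempty := ⟨x₀, hx₀⟩
  refine ⟨hO, ⟨hne, hC.isPreconnected⟩, ?_⟩
  haveI : Nonempty (Fin n) := ⟨⟨0, hn⟩⟩
  have hfr : (frontier Ω).Nonempty := by
    rw [nonempty_frontier_iff]
    refine ⟨hne, ?_⟩
    rintro rfl
    exact NormedSpace.unbounded_univ ℝ (En n) (isBounded_ball.subset hout)
  intro x hx y hy
  set d := ‖y - x‖ with hd
  have hd0 : 0 ≤ d := norm_nonneg _
  have hdx : dist x y = d := by rw [dist_comm, dist_eq_norm]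
  have hdA : d ≤ 2 * A * R := by
    have h1 := mem_ball.1 (hout hx)
    have h2 := mem_ball.1 (hout hy)
    have := dist_triangle_right x y x₀
    linarith
  set s := d / (2 * A * R) with hsd
  have hs : 0 ≤ s := by positivity
  have hs1 : s ≤ 1 := by rw [hsd, div_le_one (by positivity)]; exact hdA
  have hz : ∀ t ∈ Icc (0:ℝ) 1, x + t • (y - x) ∈ Ω := fun t ht => hC.add_smul_sub_mem hx hy ht
  have hM : ∀ t ∈ Icc (0:ℝ) 1, ‖x₀ - (x + t • (y - x))‖ ≤ A * R := by
    intro t ht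
    have := mem_ball'.1 (hout (hz t ht))
    rw [dist_eq_norm] at this
    exact this.le
  obtain ⟨γ, hγ⟩ : ∃ γ : ℝ → En n, ∀ t, γ t = (x + t • (y - x)) +
    (s * (t * (1 - t))) • (x₀ - (x + t • (y - x))) := ⟨_, fun _ => rfl⟩
  have hlip := curve_lip x y x₀ s (A * R) hs hs1 hM γ hγ
  have hsA : s * (A * R) = d / 2 := by rw [hsd]; field_simp
  rw [hsA, ← hd] at hlip
  have g0 : γ 0 = x := by simp [hγ]
  have g1 : γ 1 = y := by simp [hγ]
  have hL : LipschitzOnWith (Real.toNNReal (d + d / 2)) γ (Icc 0 1) := by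
    refine LipschitzOnWith.of_dist_le_mul ?_
    intro t ht u hu
    rw [Real.coe_toNNReal _ (by positivity), Real.dist_eq]
    exact hlip t u ht hu
  have hσ : ∀ t ∈ Icc (0:ℝ) 1, 0 ≤ s * (t * (1 - t)) ∧ s * (t * (1 - t)) ≤ 1 := by
    rintro t ⟨h0, h1⟩
    have q0 : 0 ≤ t * (1 - t) := mul_nonneg h0 (by linarith)
    have q1 : t * (1 - t) ≤ 1 := by nlinarith
    exact ⟨mul_nonneg hs q0, mul_le_one₀ hs1 q0 q1⟩
  refine ⟨γ, ⟨hL.continuousOn, ?_, g0, g1⟩, ?_, ?_⟩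
  · intro t ht
    rw [hγ]
    exact hC.add_smul_sub_mem (hz t ht) hx₀ (hσ t ht)
  · have h1 := hL.comp_eVariationOn_le (f := γ) (g := (id : ℝ → ℝ)) (s := Icc 0 1)
      (fun _ h => h)
    have h2 : eVariationOn (id : ℝ → ℝ) (Icc 0 1) ≤ ENNReal.ofReal (1 - 0) := by
      have := (monotoneOn_id (s := Icc (0:ℝ) 1)).eVariationOn_le
        (a := 0) (b := 1) (by simp) (by simp)
      simpa using this
    unfold curveLength
    calc eVariationOn γ (Icc 0 1) ≤ (Real.toNNReal (d + d / 2) : ℝ≥0∞) *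
          eVariationOn (id : ℝ → ℝ) (Icc 0 1) := h1
      _ ≤ (Real.toNNReal (d + d / 2) : ℝ≥0∞) * ENNReal.ofReal (1 - 0) := by gcongr
      _ = ENNReal.ofReal (d + d / 2) := by simp [ENNReal.ofReal]
      _ ≤ _ := by
        apply ENNReal.ofReal_le_ofReal
        rw [hdx]; linarith
  · intro t ht
    have b1 := hlip 0 t (by simp) ht
    have b2 := hlip t 1 ht (by simp)
    rw [g0] at b1
    rw [g1] at b2
    obtain ⟨σ0, σ1⟩ := hσ t ht
    have hσe : s * (t * (1 - t)) * (a * R) = a / (6 * A) * (3 * d * (t * (1 - t))) := by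
      rw [hsd]; field_simp; ring
    obtain ⟨h0, h1⟩ := ht
    rw [zero_sub, abs_neg, abs_of_nonneg h0] at b1
    rw [abs_sub_comm, abs_of_nonneg (by linarith)] at b2
    have key : min (dist x (γ t)) (dist (γ t) y) ≤ 3 * d * (t * (1 - t)) := by
      rcases le_total t (1 / 2) with h | h
      · refine (min_le_left _ _).trans (b1.trans ?_)
        have : 0 ≤ d * t * (1 / 2 - t) := by
          apply mul_nonneg (by positivity); linarith
        nlinarith
      · refine (min_le_right _ _).trans (b2.trans ?_)
        have : 0 ≤ d * (1 - t) * (t - 1 / 2) := by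
          apply mul_nonneg (mul_nonneg hd0 _) <;> linarith
        nlinarith
    calc _ ≤ a / (6 * A) * (3 * d * (t * (1 - t))) := by gcongr
      _ = s * (t * (1 - t)) * (a * R) := hσe.symm
      _ ≤ _ := ?_
    set σ := s * (t * (1 - t)) with hσd
    rcases σ0.eq_or_lt with h | hpos
    · rw [← h, zero_mul]; exact infDist_nonneg
    · rw [le_infDist hfr]
      intro f hf
      by_contra! hlt
      have hfΩ : f ∉ Ω := by
        rw [hO.frontier_eq] at hf; exact hf.2
      apply hfΩ
      have hp : x₀ + σ⁻¹ • (f - γ t) ∈ Ω := by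
        apply hin
        rw [mem_ball, dist_eq_norm, add_sub_cancel_left, norm_smul, norm_inv,
          Real.norm_of_nonneg σ0, ← dist_eq_norm, dist_comm, inv_mul_lt_iff₀ hpos]
        exact hlt
      have := hC.add_smul_sub_mem (hz t ⟨h0, h1⟩) hp ⟨σ0, σ1⟩
      convert this using 1
      have e : σ • (x₀ + σ⁻¹ • (f - γ t) - (x + t • (y - x))) =
          σ • (x₀ - (x + t • (y - x))) + (f - γ t) := by
        rw [add_sub_right_comm, smul_add, smul_inv_smul₀ hpos.ne']
      rw [e, ← add_assoc, ← hγ t]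
      abel
end
end

section
/- Let n ≥ 2 and let K ⊊ ℝⁿ be a nonempty closed convex set. Then every connected component Ω of ℝⁿ ∖ K is an inner uniform domain: there exist c ∈ (0,1) and C ∈ (1,∞) such that Ω is (c,C)-inner uniform. -/
open Set Metric MeasureTheory ENNReal

noncomputable section

/-- `γ : [0,1] → Ω` is a `(c,C)`-inner uniform curve in `Ω`. -/
def IsInnerUniformCurve {X : Type*} [PseudoEMetricSpace X] (c C : ℝ) (Ω : Set X)
    (γ : ℝ → X) : Prop :=
  ContinuousOn γ (Set.Icc 0 1) ∧ Set.MapsTo γ (Set.Icc 0 1) Ω ∧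
    curveLength γ ≤ ENNReal.ofReal C * innerDist Ω (γ 0) (γ 1) ∧
    ∀ t ∈ Set.Icc (0:ℝ) 1,
      ENNReal.ofReal c * min (innerDist Ω (γ 0) (γ t)) (innerDist Ω (γ t) (γ 1)) ≤
        EMetric.infEdist (γ t) Ωᶜ

/-- `Ω` is a `(c,C)`-inner uniform domain. -/
def IsInnerUniformDomain {X : Type*} [PseudoEMetricSpace X] (c C : ℝ) (Ω : Set X) : Prop :=
  IsOpen Ω ∧ IsConnected Ω ∧
    ∀ x ∈ Ω, ∀ y ∈ Ω, ∃ γ : ℝ → X, IsInnerUniformCurve c C Ω γ ∧ γ 0 = x ∧ γ 1 = y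

/-- `p` and `q` are joined in `S` by a curve of length at most `l`. -/
def Joi {X : Type*} [PseudoEMetricSpace X] (S : Set X) (p q : X) (l : ℝ) : Prop :=
  ∃ g : ℝ → X, IsCurveIn S p q g ∧ curveLength g ≤ ENNReal.ofReal l

theorem Joi.mono {X : Type*} [PseudoEMetricSpace X] {S T : Set X} {p q : X} {l m : ℝ}
    (h : Joi S p q l) (hST : S ⊆ T) (hl : l ≤ m) : Joi T p q m := by
  obtain ⟨g, ⟨h1, h2, h3, h4⟩, h5⟩ := h
  exact ⟨g, ⟨h1, fun t ht => hST (h2 ht), h3, h4⟩, h5.trans (ENNReal.ofReal_le_ofReal hl)⟩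

theorem Joi.symm {X : Type*} [PseudoEMetricSpace X] {S : Set X} {p q : X} {l : ℝ}
    (h : Joi S p q l) : Joi S q p l := by
  obtain ⟨g, ⟨h1, h2, h3, h4⟩, h5⟩ := h
  have hm : MapsTo (fun t : ℝ => 1 - t) (Icc 0 1) (Icc 0 1) := by
    intro t ht
    exact ⟨by linarith [ht.2], by linarith [ht.1]⟩
  refine ⟨g ∘ fun t => 1 - t, ⟨h1.comp (by fun_prop) hm, fun t ht => h2 (hm ht), ?_, ?_⟩, ?_⟩
  · simp [h4]
  · simp [h3]
  · refine le_trans (eVariationOn.comp_le_of_antitoneOn g _ ?_ hm) h5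
    intro a _ b _ hab
    simp only
    linarith

theorem Joi.self {X : Type*} [PseudoEMetricSpace X] {S : Set X} {p q : X} {l : ℝ}
    (h : Joi S p q l) : Joi {z | z ∈ S ∧ Joi S p z l} p q l := by
  obtain ⟨g, ⟨h1, h2, h3, h4⟩, h5⟩ := h
  refine ⟨g, ⟨h1, fun t ht => ⟨h2 ht, ?_⟩, h3, h4⟩, h5⟩
  have hm : MapsTo (fun s : ℝ => t * s) (Icc 0 1) (Icc 0 1) := by
    intro s hs
    exact ⟨mul_nonneg ht.1 hs.1, mul_le_one₀ ht.2 hs.1 hs.2⟩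
  refine ⟨g ∘ fun s => t * s, ⟨h1.comp (by fun_prop) hm, fun s hs => h2 (hm hs), ?_, ?_⟩, ?_⟩
  · simp [h3]
  · simp
  · refine le_trans (eVariationOn.comp_le_of_monotoneOn g _ ?_ hm) h5
    intro a _ b _ hab
    exact mul_le_mul_of_nonneg_left hab ht.1

theorem Joi.trans {X : Type*} [PseudoEMetricSpace X] {S : Set X} {p q r : X} {l m : ℝ}
    (h : Joi S p q l) (h' : Joi S q r m) (hl : 0 ≤ l) (hm : 0 ≤ m) : Joi S p r (l + m) := by
  obtain ⟨g, ⟨h1, h2, h3, h4⟩, h5⟩ := h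
  obtain ⟨k, ⟨k1, k2, k3, k4⟩, k5⟩ := h'
  set f : ℝ → X := fun t => if t ≤ 1/2 then g (2*t) else k (2*t-1) with hf
  have e1 : EqOn f (g ∘ fun t => 2*t) (Icc 0 (1/2)) := by
    intro t ht
    simp only [hf, if_pos ht.2, Function.comp]
  have e2 : EqOn f (k ∘ fun t => 2*t-1) (Icc (1/2) 1) := by
    intro t ht
    rcases eq_or_lt_of_le ht.1 with h | h
    · subst h
      simp [hf, h4, k3]
    · simp only [hf, if_neg (not_le.2 h), Function.comp]
  have m1 : MapsTo (fun t : ℝ => 2*t) (Icc 0 (1/2)) (Icc 0 1) := by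
    intro t ht
    exact ⟨by linarith [ht.1], by linarith [ht.2]⟩
  have m2 : MapsTo (fun t : ℝ => 2*t-1) (Icc (1/2) 1) (Icc 0 1) := by
    intro t ht
    exact ⟨by linarith [ht.1], by linarith [ht.2]⟩
  have hU : Icc (0:ℝ) (1/2) ∪ Icc (1/2) 1 = Icc 0 1 :=
    Icc_union_Icc_eq_Icc (by norm_num) (by norm_num)
  refine ⟨f, ⟨?_, ?_, ?_, ?_⟩, ?_⟩
  · rw [← hU]
    refine ContinuousOn.union_of_isClosed ?_ ?_ isClosed_Icc isClosed_Icc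
    · exact (h1.comp (by fun_prop) m1).congr e1
    · exact (k1.comp (by fun_prop) m2).congr e2
  · rw [← hU]
    rintro t (ht | ht)
    · rw [e1 ht]; exact h2 (m1 ht)
    · rw [e2 ht]; exact k2 (m2 ht)
  · simp [hf, h3]
  · rw [e2 ⟨by norm_num, le_refl _⟩]
    norm_num [k4]
  · have := eVariationOn.Icc_add_Icc f (s := univ) (a := 0) (b := 1/2) (c := (1:ℝ)) (by norm_num)
      (by norm_num) (mem_univ _)
    simp only [univ_inter] at this
    rw [curveLength, ← this, ENNReal.ofReal_add hl hm]
    refine add_le_add ?_ ?_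
    · rw [eVariationOn.eq_of_eqOn e1]
      refine le_trans (eVariationOn.comp_le_of_monotoneOn g _ ?_ m1) h5
      intro a _ b _ hab
      simp only
      linarith
    · rw [eVariationOn.eq_of_eqOn e2]
      refine le_trans (eVariationOn.comp_le_of_monotoneOn k _ ?_ m2) k5
      intro a _ b _ hab
      simp only
      linarith

section

variable {E : Type*} [NormedAddCommGroup E] [InnerProductSpace ℝ E]

theorem joi_seg {S : Set E} {p q : E} {l : ℝ} (hl : ‖q - p‖ ≤ l)
    (hS : ∀ s ∈ Icc (0:ℝ) 1, p + s • (q - p) ∈ S) : Joi S p q l := by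
  refine ⟨fun s => p + s • (q - p), ⟨by fun_prop, hS, by simp, by simp⟩, ?_⟩
  have hL : LipschitzOnWith (‖q - p‖₊) (fun s : ℝ => p + s • (q - p)) (Icc 0 1) := by
    apply LipschitzWith.lipschitzOnWith
    apply LipschitzWith.of_dist_le_mul
    intro a b
    rw [dist_eq_norm, dist_eq_norm]
    have : p + a • (q - p) - (p + b • (q - p)) = (a - b) • (q - p) := by module
    rw [this, norm_smul, mul_comm]
    rfl
  have h2 := hL.comp_eVariationOn_le (g := (id : ℝ → ℝ)) (s := Icc 0 1) (fun t ht => ht)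
  have h3 : eVariationOn (id : ℝ → ℝ) (Icc 0 1) ≤ ENNReal.ofReal 1 := by
    have := (monotone_id (α := ℝ)).monotoneOn (Icc 0 1) |>.eVariationOn_le (a := (0:ℝ)) (b := 1)
      (by simp) (by simp)
    simpa using this
  refine le_trans h2 (le_trans (mul_le_mul_right h3 _) ?_)
  rw [ENNReal.ofReal_one, mul_one]
  rw [ENNReal.le_ofReal_iff_toReal_le (by simp) ((norm_nonneg _).trans hl)]
  simpa using hl

theorem exists_normals [CompleteSpace E] {K : Set E} (hne : K.Nonempty) (hc : IsClosed K)
    (hK : Convex ℝ K) : ∃ u : E → E, ContinuousOn u Kᶜ ∧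
      ∀ x ∈ Kᶜ, ‖u x‖ = 1 ∧ ∀ k ∈ K, 0 < inner ℝ (u x) (x - k) := by
  have h1 : ∀ x : E, ∃ v ∈ K, ∀ k ∈ K, inner ℝ (x - v) (k - v) ≤ 0 := by
    intro x
    obtain ⟨v, hv, h⟩ := exists_norm_eq_iInf_of_complete_convex hne hc.isComplete hK x
    exact ⟨v, hv, (norm_eq_iInf_iff_real_inner_le_zero hK hv).1 h⟩
  choose P hP hPK using h1
  have hPc : Continuous P := by
    have : LipschitzWith 1 P := by
      apply LipschitzWith.of_dist_le_mul
      intro x y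
      have a := hPK x (P y) (hP y)
      have b := hPK y (P x) (hP x)
      have e : ‖P x - P y‖ * ‖P x - P y‖ ≤ inner ℝ (x - y) (P x - P y) := by
        rw [← real_inner_self_eq_norm_mul_norm]
        have : inner ℝ (P x - P y) (P x - P y) = inner ℝ (x - y) (P x - P y)
          + inner ℝ (x - P x) (P y - P x) + inner ℝ (y - P y) (P x - P y) := by
          simp only [inner_sub_left, inner_sub_right]; ring
        linarith
      have e2 := real_inner_le_norm (x - y) (P x - P y)
      rw [dist_eq_norm, dist_eq_norm, NNReal.coe_one, one_mul]
      by_contra! h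
      nlinarith [norm_nonneg (x - y)]
    exact this.continuous
  have hpos : ∀ x ∈ Kᶜ, 0 < ‖x - P x‖ := by
    intro x hx
    rw [norm_pos_iff, sub_ne_zero]
    rintro h
    exact hx (h ▸ hP x)
  refine ⟨fun x => ‖x - P x‖⁻¹ • (x - P x), ?_, ?_⟩
  · refine ContinuousOn.smul (ContinuousOn.inv₀ (by fun_prop) ?_) (by fun_prop)
    intro x hx
    exact (hpos x hx).ne'
  · intro x hx
    have := hpos x hx
    refine ⟨?_, fun k hk => ?_⟩
    · rw [norm_smul, norm_inv, norm_norm, inv_mul_cancel₀ this.ne']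
    · rw [inner_smul_left]
      apply _root_.mul_pos
      · simpa using this
      · have e : inner ℝ (x - P x) (x - k) = ‖x - P x‖ * ‖x - P x‖
          - inner ℝ (x - P x) (k - P x) := by
          rw [← real_inner_self_eq_norm_mul_norm]
          simp only [inner_sub_left, inner_sub_right]; ring
        have := hPK x k hk
        nlinarith

/-- Points at depth at least `R` in a supporting half space. -/
def Deep (K : Set E) (R : ℝ) (a : E) : Set E := {z | ∀ k ∈ K, R ≤ inner ℝ a (z - k)}

theorem deep_seg {K : Set E} {R : ℝ} {a p q : E} (hp : p ∈ Deep K R a) (hq : q ∈ Deep K R a)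
    {s : ℝ} (hs : s ∈ Icc (0:ℝ) 1) : p + s • (q - p) ∈ Deep K R a := by
  intro k hk
  have h1 := hp k hk
  have h2 := hq k hk
  have : p + s • (q - p) - k = (1 - s) • (p - k) + s • (q - k) := by module
  rw [this, inner_add_right, inner_smul_right, inner_smul_right]
  nlinarith [hs.1, hs.2]

theorem deep_dist {K : Set E} {R : ℝ} {a z k : E} (ha : ‖a‖ = 1) (hz : z ∈ Deep K R a)
    (hk : k ∈ K) : R ≤ dist z k := by
  have := (hz k hk).trans (real_inner_le_norm a (z - k))
  rwa [ha, one_mul, ← dist_eq_norm] at this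

theorem joi_core {K : Set E} {R : ℝ} (hR : 0 < R) {a b p q : E} (ha : ‖a‖ = 1) (hb : ‖b‖ = 1)
    (hp : p ∈ Deep K R a) (hq : q ∈ Deep K R b) (hab : -(7/8) ≤ inner ℝ a b)
    (hpq : ‖q - p‖ ≤ 4 * R) : Joi {z | ∀ k ∈ K, R ≤ dist z k} p q (132 * R) := by
  have haa : inner ℝ a a = (1:ℝ) := by rw [real_inner_self_eq_norm_mul_norm, ha, one_mul]
  have hbb : inner ℝ b b = (1:ℝ) := by rw [real_inner_self_eq_norm_mul_norm, hb, one_mul]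
  have hba : inner ℝ b a = (inner ℝ a b : ℝ) := real_inner_comm _ _
  have hw : ‖(32 * R) • (a + b)‖ ≤ 64 * R := by
    rw [norm_smul, Real.norm_of_nonneg (by positivity)]
    nlinarith [norm_add_le a b]
  have hpw : p + (32 * R) • (a + b) ∈ Deep K R a := by
    intro k hk
    have : p + (32 * R) • (a + b) - k = (p - k) + (32 * R) • (a + b) := by module
    rw [this, inner_add_right, inner_smul_right, inner_add_right, haa]
    nlinarith [hp k hk]
  have hqw : q + (32 * R) • (a + b) ∈ Deep K R b := by
    intro k hk
    have : q + (32 * R) • (a + b) - k = (q - k) + (32 * R) • (a + b) := by module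
    rw [this, inner_add_right, inner_smul_right, inner_add_right, hbb, hba]
    nlinarith [hq k hk]
  have hpw' : p + (32 * R) • (a + b) ∈ Deep K R b := by
    intro k hk
    have : p + (32 * R) • (a + b) - k = (q - k) - (q - p) + (32 * R) • (a + b) := by module
    rw [this, inner_add_right, inner_sub_right, inner_smul_right, inner_add_right, hbb, hba]
    have := real_inner_le_norm b (q - p)
    rw [hb] at this
    nlinarith [hq k hk]
  have j1 : Joi {z | ∀ k ∈ K, R ≤ dist z k} p (p + (32 * R) • (a + b)) (64 * R) :=
    joi_seg (by simpa using hw) fun s hs k hk => deep_dist ha (deep_seg hp hpw hs) hk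
  have j2 : Joi {z | ∀ k ∈ K, R ≤ dist z k} (p + (32 * R) • (a + b)) (q + (32 * R) • (a + b))
      (4 * R) :=
    joi_seg (by simpa using hpq) fun s hs k hk => deep_dist hb (deep_seg hpw' hqw hs) hk
  have j3 : Joi {z | ∀ k ∈ K, R ≤ dist z k} q (q + (32 * R) • (a + b)) (64 * R) :=
    joi_seg (by simpa using hw) fun s hs k hk => deep_dist hb (deep_seg hq hqw hs) hk
  have := (j1.trans j2 (by positivity) (by positivity)).trans j3.symm (by positivity)
    (by positivity)
  exact this.mono le_rfl (by linarith)

/-- The good points. -/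
def Good (K : Set E) (x y : E) : Set E :=
  {z | z ∈ Kᶜ ∧ ∃ l : ℝ, 0 ≤ l ∧ (Joi Kᶜ x z l ∨ Joi Kᶜ z y l) ∧ ∀ k ∈ K, l / 300 ≤ dist z k}

theorem joi_good [CompleteSpace E] {K : Set E} (hne : K.Nonempty) (hc : IsClosed K)
    (hK : Convex ℝ K) {x y : E} {g : ℝ → E} (hg : IsCurveIn Kᶜ x y g) {R : ℝ} (hR : 0 < R)
    (hgR : ∀ t ∈ Icc (0:ℝ) 1, dist x (g t) ≤ R) : Joi (Good K x y) x y (266 * R) := by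
  obtain ⟨u, huc, hu⟩ := exists_normals hne hc hK
  obtain ⟨g1, g2, g3, g4⟩ := hg
  have hx : x ∈ Kᶜ := g3 ▸ g2 (by simp)
  have hy : y ∈ Kᶜ := g4 ▸ g2 (by simp)
  have hdeep : ∀ z ∈ Kᶜ, ∀ τ : ℝ, z + τ • u z ∈ Deep K τ (u z) := by
    intro z hz τ k hk
    have : z + τ • u z - k = (z - k) + τ • u z := by module
    rw [this, inner_add_right, inner_smul_right, real_inner_self_eq_norm_mul_norm, (hu z hz).1]
    linarith [(hu z hz).2 k hk]
  have hout : ∀ z ∈ Kᶜ, ∀ τ : ℝ, 0 ≤ τ → z + τ • u z ∈ Kᶜ := by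
    intro z hz τ hτ hk
    have h0 := (hu z hz).2 _ hk
    have : z - (z + τ • u z) = -(τ • u z) := by module
    rw [this, inner_neg_right, inner_smul_right, real_inner_self_eq_norm_mul_norm,
      (hu z hz).1] at h0
    linarith
  have hseg : ∀ z ∈ Kᶜ, ∀ τ : ℝ, 0 ≤ τ → Joi Kᶜ z (z + τ • u z) τ := by
    intro z hz τ hτ
    refine joi_seg ?_ ?_
    · simp [norm_smul, (hu z hz).1, abs_of_nonneg hτ]
    · intro s hs
      have := hout z hz (s * τ) (mul_nonneg hs.1 hτ)
      simpa [smul_smul] using this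
  have hnear : ∀ z ∈ Kᶜ, ∀ w ∈ Kᶜ, dist z w ≤ 2 * R →
      ‖(w + R • u w) - (z + R • u z)‖ ≤ 4 * R := by
    intro z hz w hw h
    have : (w + R • u w) - (z + R • u z) = (w - z) + (R • u w - R • u z) := by module
    rw [this]
    have n1 := norm_add_le (w - z) (R • u w - R • u z)
    have n2 := norm_sub_le (R • u w) (R • u z)
    rw [norm_smul, norm_smul, (hu z hz).1, (hu w hw).1, Real.norm_of_nonneg hR.le] at n2
    rw [dist_comm, dist_eq_norm] at h
    linarith
  -- the core curve
  have hcore : Joi {z | ∀ k ∈ K, R ≤ dist z k} (x + R • u x) (y + R • u y) (264 * R) := by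
    have hxy : dist x y ≤ R := g4 ▸ hgR 1 (by simp)
    by_cases hab : -(7/8) ≤ inner ℝ (u x) (u y)
    · exact (joi_core hR (hu x hx).1 (hu y hy).1 (hdeep x hx R) (hdeep y hy R) hab
        (hnear x hx y hy (by linarith))).mono le_rfl (by linarith)
    · push Not at hab
      have hcont : ContinuousOn (fun t => inner ℝ (u x) (u (g t))) (Icc (0:ℝ) 1) :=
        ContinuousOn.inner continuousOn_const (huc.comp g1 g2)
      have hiv := intermediate_value_Icc' (zero_le_one' ℝ) hcont
      have h0 : (0:ℝ) ∈ Icc (inner ℝ (u x) (u (g 1))) (inner ℝ (u x) (u (g 0))) := by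
        rw [g3, g4, real_inner_self_eq_norm_mul_norm, (hu x hx).1]
        constructor
        · linarith
        · norm_num
      obtain ⟨t, ht, hft⟩ := hiv h0
      have hz : g t ∈ Kᶜ := g2 ht
      have hzR := hgR t ht
      simp only at hft
      set z := g t
      have hzy : -(7/8) ≤ inner ℝ (u z) (u y) := by
        have a1 := abs_le.1 (abs_real_inner_le_norm (u z) (u x + u y))
        rw [inner_add_right, real_inner_comm, hft, (hu z hz).1] at a1
        have a2 : ‖u x + u y‖ * ‖u x + u y‖ = 2 + 2 * inner ℝ (u x) (u y) := by
          rw [← real_inner_self_eq_norm_mul_norm, inner_add_left, inner_add_right,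
            inner_add_right, real_inner_self_eq_norm_mul_norm, real_inner_self_eq_norm_mul_norm,
            (hu x hx).1, (hu y hy).1, real_inner_comm (u x) (u y)]
          ring
        have a3 : ‖u x + u y‖ ≤ 1/2 := by
          by_contra! h
          nlinarith
        linarith [a1.1]
      have j1 := joi_core hR (hu x hx).1 (hu z hz).1 (hdeep x hx R) (hdeep z hz R)
        (by rw [hft]; norm_num) (hnear x hx z hz (by linarith))
      have j2 := joi_core hR (hu z hz).1 (hu y hy).1 (hdeep z hz R) (hdeep y hy R)
        hzy (hnear z hz y hy (by
          have := dist_triangle z x y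
          rw [dist_comm z x] at this
          linarith))
      exact (j1.trans j2 (by positivity) (by positivity)).mono le_rfl (by linarith)
  have hsub : {z | ∀ k ∈ K, R ≤ dist z k} ⊆ Kᶜ := by
    intro z hz hk
    have := hz z hk
    rw [dist_self] at this
    linarith
  have c1 : Joi (Good K x y) (x + R • u x) (y + R • u y) (264 * R) := by
    refine hcore.self.mono ?_ le_rfl
    rintro z ⟨h1, h2⟩
    refine ⟨hsub h1, R + 264 * R, by positivity, Or.inl ?_, ?_⟩
    · exact (hseg x hx R hR.le).trans (h2.mono hsub le_rfl) hR.le (by positivity)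
    · intro k hk
      have := h1 k hk
      linarith
  have c0 : Joi (Good K x y) x (x + R • u x) R := by
    refine joi_seg ?_ ?_
    · simp [norm_smul, (hu x hx).1, abs_of_nonneg hR.le]
    · intro s hs
      have h0 : 0 ≤ s * R := mul_nonneg hs.1 hR.le
      have e : x + s • (x + R • u x - x) = x + (s * R) • u x := by
        simp [smul_smul]
      rw [e]
      refine ⟨hout x hx _ h0, s * R, h0, Or.inl (hseg x hx _ h0), fun k hk => ?_⟩
      have := deep_dist (hu x hx).1 (hdeep x hx (s * R)) hk
      linarith
  have c2 : Joi (Good K x y) y (y + R • u y) R := by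
    refine joi_seg ?_ ?_
    · simp [norm_smul, (hu y hy).1, abs_of_nonneg hR.le]
    · intro s hs
      have h0 : 0 ≤ s * R := mul_nonneg hs.1 hR.le
      have e : y + s • (y + R • u y - y) = y + (s * R) • u y := by
        simp [smul_smul]
      rw [e]
      refine ⟨hout y hy _ h0, s * R, h0, Or.inr (hseg y hy _ h0).symm, fun k hk => ?_⟩
      have := deep_dist (hu y hy).1 (hdeep y hy (s * R)) hk
      linarith
  exact ((c0.trans c1 hR.le (by positivity)).trans c2.symm (by positivity) hR.le).mono le_rfl
    (by linarith)

theorem curve_in_comp {K : Set E} {o p q : E} {g : ℝ → E} (hg : IsCurveIn Kᶜ p q g)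
    (hp : p ∈ connectedComponentIn Kᶜ o) : IsCurveIn (connectedComponentIn Kᶜ o) p q g := by
  obtain ⟨g1, g2, g3, g4⟩ := hg
  refine ⟨g1, ?_, g3, g4⟩
  have hpre : IsPreconnected (g '' Icc 0 1) := isPreconnected_Icc.image g g1
  have h := hpre.subset_connectedComponentIn (F := Kᶜ) (x := p)
    ⟨0, by simp, g3⟩ (by rintro _ ⟨t, ht, rfl⟩; exact g2 ht)
  rw [connectedComponentIn_eq hp]
  intro t ht
  exact h ⟨t, ht, rfl⟩

theorem innerDist_le_of_joi {K : Set E} {o p q : E} {l : ℝ} (hg : Joi Kᶜ p q l)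
    (hp : p ∈ connectedComponentIn Kᶜ o) :
    innerDist (connectedComponentIn Kᶜ o) p q ≤ ENNReal.ofReal l := by
  obtain ⟨g, h1, h2⟩ := hg
  exact (iInf₂_le g (curve_in_comp h1 hp)).trans h2

theorem infEdist_comp {K : Set E} {o z : E} (hz : z ∈ connectedComponentIn Kᶜ o) {r : ℝ}
    (h : ∀ k ∈ K, r ≤ dist z k) :
    ENNReal.ofReal r ≤ EMetric.infEdist z (connectedComponentIn Kᶜ o)ᶜ := by
  rcases le_or_gt r 0 with hr | hr
  · simp [ENNReal.ofReal_of_nonpos hr]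
  have hb : ball z r ⊆ connectedComponentIn Kᶜ o := by
    rw [connectedComponentIn_eq hz]
    refine (convex_ball z r).isPreconnected.subset_connectedComponentIn (mem_ball_self hr) ?_
    intro w hw hk
    have := h w hk
    rw [mem_ball, dist_comm] at hw
    linarith
  refine Metric.le_infEDist.2 ?_
  intro w hw
  rw [edist_dist]
  apply ENNReal.ofReal_le_ofReal
  by_contra! hlt
  exact hw (hb (by rwa [mem_ball, dist_comm]))

theorem good_curve {K : Set E} {o x y : E} {l : ℝ} (hx : x ∈ connectedComponentIn Kᶜ o)
    (hy : y ∈ connectedComponentIn Kᶜ o) (h : Joi (Good K x y) x y l) :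
    ∃ g, IsCurveIn (connectedComponentIn Kᶜ o) x y g ∧ curveLength g ≤ ENNReal.ofReal l ∧
    ∀ t ∈ Icc (0:ℝ) 1, ENNReal.ofReal (1/300) *
      min (innerDist (connectedComponentIn Kᶜ o) x (g t))
        (innerDist (connectedComponentIn Kᶜ o) (g t) y) ≤
        EMetric.infEdist (g t) (connectedComponentIn Kᶜ o)ᶜ := by
  obtain ⟨g, ⟨g1, g2, g3, g4⟩, hl⟩ := h
  have hc := curve_in_comp (K := K) (o := o) ⟨g1, fun t ht => (g2 ht).1, g3, g4⟩ hx
  refine ⟨g, hc, hl, fun t ht => ?_⟩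
  obtain ⟨-, m, hm, hj, hd⟩ := g2 ht
  have hzt := hc.2.1 ht
  refine le_trans ?_ (infEdist_comp hzt hd)
  have : ENNReal.ofReal (m / 300) = ENNReal.ofReal (1/300) * ENNReal.ofReal m := by
    rw [← ENNReal.ofReal_mul (by norm_num)]
    congr 1; ring
  rw [this]
  gcongr
  rcases hj with hj | hj
  · exact (min_le_left _ _).trans (innerDist_le_of_joi hj hx)
  · exact (min_le_right _ _).trans (innerDist_le_of_joi hj hzt)

theorem inner_uniform_aux [CompleteSpace E] {K : Set E} (hne : K.Nonempty) (hc : IsClosed K)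
    (hK : Convex ℝ K) {o : E} (ho : o ∈ Kᶜ) :
    IsInnerUniformDomain (1/300) 1000 (connectedComponentIn Kᶜ o) := by
  have hopen : IsOpen (connectedComponentIn Kᶜ o) := hc.isOpen_compl.connectedComponentIn
  have hconn : IsConnected (connectedComponentIn Kᶜ o) := isConnected_connectedComponentIn_iff.2 ho
  have hsub : connectedComponentIn Kᶜ o ⊆ Kᶜ := connectedComponentIn_subset _ _
  refine ⟨hopen, hconn, fun x hx y hy => ?_⟩
  -- finiteness of the inner distance
  have hfin : innerDist (connectedComponentIn Kᶜ o) x y ≠ ⊤ := by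
    have hpc : IsPathConnected (connectedComponentIn Kᶜ o) :=
      (hopen.isConnected_iff_isPathConnected).1 hconn
    obtain ⟨γ, hγ⟩ := hpc.joinedIn x hx y hy
    have hcv : IsCurveIn Kᶜ x y γ.extend := by
      refine ⟨γ.continuous_extend.continuousOn, fun t ht => ?_, by simp, by simp⟩
      rw [Path.extend_apply γ ht]
      exact hsub (hγ _)
    obtain ⟨R, hR⟩ := (isCompact_Icc (a := (0:ℝ)) (b := 1)).exists_bound_of_continuousOn
      (f := fun t => dist x (γ.extend t))
      (continuous_const.dist γ.continuous_extend).continuousOn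
    have hJ := joi_good hne hc hK hcv (R := |R| + 1) (by positivity) (by
      intro t ht
      have := hR t ht
      rw [Real.norm_of_nonneg dist_nonneg] at this
      linarith [le_abs_self R])
    have h := innerDist_le_of_joi (hJ.mono (fun z hz => hz.1) le_rfl) hx
    exact ne_top_of_le_ne_top ENNReal.ofReal_ne_top h
  have hmain : ∃ g, IsCurveIn (connectedComponentIn Kᶜ o) x y g ∧
      curveLength g ≤ ENNReal.ofReal 1000 * innerDist (connectedComponentIn Kᶜ o) x y ∧
    ∀ t ∈ Icc (0:ℝ) 1, ENNReal.ofReal (1/300) *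
      min (innerDist (connectedComponentIn Kᶜ o) x (g t))
        (innerDist (connectedComponentIn Kᶜ o) (g t) y) ≤
        EMetric.infEdist (g t) (connectedComponentIn Kᶜ o)ᶜ := by
    by_cases hxy : x = y
    · subst hxy
      have hJ : Joi (Good K x x) x x 0 := by
        refine joi_seg (by simp) ?_
        intro s _
        simp only [sub_self, smul_zero, add_zero]
        refine ⟨hsub hx, 0, le_rfl, Or.inl (joi_seg (by simp) ?_), ?_⟩
        · intro s _
          simpa using hsub hx
        · intro k _
          simp
      obtain ⟨g, h1, h2, h3⟩ := good_curve hx hx hJ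
      exact ⟨g, h1, h2.trans (by simp), h3⟩
    · set D := innerDist (connectedComponentIn Kᶜ o) x y with hD
      have hpos : D ≠ 0 := by
        have : edist x y ≤ D := by
          refine le_iInf₂ fun g hg => ?_
          obtain ⟨-, -, h3, h4⟩ := hg
          rw [← h3, ← h4]
          exact eVariationOn.edist_le g (by simp) (by simp)
        intro h0
        rw [h0, nonpos_iff_eq_zero, edist_eq_zero] at this
        exact hxy this
      have hDr : 0 < D.toReal := ENNReal.toReal_pos hpos hfin
      have hDD : D < ENNReal.ofReal (2 * D.toReal) := by
        rw [ENNReal.lt_ofReal_iff_toReal_lt hfin]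
        linarith
      obtain ⟨g, hgl⟩ := iInf_lt_iff.1 hDD
      obtain ⟨hg, hgl⟩ := iInf_lt_iff.1 hgl
      have hg' : IsCurveIn Kᶜ x y g := ⟨hg.1, fun t ht => hsub (hg.2.1 ht), hg.2.2⟩
      have hJ := joi_good hne hc hK hg' (R := 2 * D.toReal) (by positivity) (by
        intro t ht
        have : edist (g 0) (g t) ≤ curveLength g := eVariationOn.edist_le g (by simp) ht
        rw [hg.2.2.1] at this
        have h2 := this.trans hgl.le
        rwa [edist_dist, ENNReal.ofReal_le_ofReal_iff (by positivity)] at h2)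
      obtain ⟨f, h1, h2, h3⟩ := good_curve hx hy hJ
      refine ⟨f, h1, h2.trans ?_, h3⟩
      conv_rhs => rw [← ENNReal.ofReal_toReal hfin]
      rw [← ENNReal.ofReal_mul (by norm_num)]
      apply ENNReal.ofReal_le_ofReal
      linarith
  obtain ⟨g, ⟨g1, g2, g3, g4⟩, hl, hd⟩ := hmain
  refine ⟨g, ⟨g1, g2, ?_, ?_⟩, g3, g4⟩
  · rw [g3, g4]; exact hl
  · rw [g3, g4]; exact hd

end

/-- Every connected component of the complement of a nonempty proper closed convex
subset of `ℝⁿ`, `n ≥ 2`, is an inner uniform domain. -/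
theorem statement11 (n : ℕ) (hn : 2 ≤ n) (K : Set (En n)) (hKne : K.Nonempty)
    (hKclosed : IsClosed K) (hKconv : Convex ℝ K) (hKproper : K ≠ Set.univ) :
    ∀ x ∈ Kᶜ, ∃ c ∈ Set.Ioo (0:ℝ) 1, ∃ C : ℝ, 1 < C ∧
      IsInnerUniformDomain c C (connectedComponentIn Kᶜ x) := by
  intro x hx
  exact ⟨1/300, by constructor <;> norm_num, 1000, by norm_num,
    inner_uniform_aux hKne hKclosed hKconv hx⟩
end
end
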